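/- arXiv:1506.08666 — 3 statements merged into one kernel-verified Lean document; each statement's English description precedes it below -/
import Mathlib

section
/- Let Ω be a homogeneous subset of the free algebra T (i.e., every element of Ω is homogeneous with respect to the grading of T by word length) such that the vectors μ(z) (z ∈ Ω) form a basis of the F-vector space U⁺_q. Then the vectors ν(z) (z ∈ Ω) form a basis of the F-vector space O_q. -/
/-!
The theorem says that `U⁺_q` is the associated graded algebra of `O_q` for the filtration by word
length. Let `t` be homogeneous of degree `n` in the free algebra `T`.

*Spanning.* If `μ(t) = 0`, then `t` lies in the ideal generated by the `q`-Serre expressions, and the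
`q`-Dolan/Grady relations express each of these, in `O_q`, through words of smaller length; so `ν(t)`
is a combination of images of words of length `< n` (`nuHom_mem_lowSpan`). Expanding `μ(t)` in the
given basis, only the elements of degree `n` matter since `U⁺_q` is graded (`exists_proj`), and
induction on `n` shows that `ν(t)` is in the span of `ν(Ω)`.

*Independence.* One needs that `O_q` is not smaller than `U⁺_q`. To this end `O_q` is made to act on
`U⁺_q` (`exists_action`). Let `D` and `E` be the skew derivations of `U⁺_q` determined by
`DX = q²XD + (1 - q²)`, `DY = q⁻²YD`, `EY = q²YE + (1 - q²)`, `EX = q⁻²XE`, where `X` and `Y` stand for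
left multiplications (`GenPair.exists_skew`). They satisfy the `q`-Serre relations, because the
`q`-Serre expressions in `D` and `E` `q`-commute with `X` and `Y` and kill `1`
(`GenPair.qSerre_skew_eq_zero`). A normal ordering computation then shows that `A ↦ X + D`,
`B ↦ Y + E` respects the `q`-Dolan/Grady relations (`qSerre_raise_add_lower`). As `D` and `E` do not
raise the degree, `ν(t)` sends `1` to `μ(t)` plus terms of degree `< n` (`exists_symbol`). Hence the
top-degree part of a linear relation between the `ν(z)` is a linear relation between the `μ(z)`.
-/

noncomputable section

/-- The `q`-Serre expression `u³v − [3]_q u²vu + [3]_q uvu² − vu³`,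
where `[3]_q = (q³ − q⁻³)/(q − q⁻¹)`. -/
def qSerre {F : Type*} [Field F] (q : F) {A : Type*} [Ring A] [Algebra F A] (u v : A) : A :=
  u ^ 3 * v - ((q ^ 3 - q⁻¹ ^ 3) / (q - q⁻¹)) • (u ^ 2 * v * u)
    + ((q ^ 3 - q⁻¹ ^ 3) / (q - q⁻¹)) • (u * v * u ^ 2) - v * u ^ 3
/-- The defining relations (`q`-Serre relations) of the positive part of `U_q(sl₂-hat)`. -/
inductive UqPlusRel (F : Type*) [Field F] (q : F) :
    FreeAlgebra F (Fin 2) → FreeAlgebra F (Fin 2) → Prop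
  | serreXY : UqPlusRel F q (qSerre q (FreeAlgebra.ι F 0) (FreeAlgebra.ι F 1)) 0
  | serreYX : UqPlusRel F q (qSerre q (FreeAlgebra.ι F 1) (FreeAlgebra.ι F 0)) 0

/-- The positive part `U⁺_q` of `U_q(sl₂-hat)`. -/
abbrev UqPlus (F : Type*) [Field F] (q : F) := RingQuot (UqPlusRel F q)

/-- The generator `X` of `U⁺_q`. -/
def Xg (F : Type*) [Field F] (q : F) : UqPlus F q :=
  RingQuot.mkAlgHom F (UqPlusRel F q) (FreeAlgebra.ι F 0)

/-- The generator `Y` of `U⁺_q`. -/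
def Yg (F : Type*) [Field F] (q : F) : UqPlus F q :=
  RingQuot.mkAlgHom F (UqPlusRel F q) (FreeAlgebra.ι F 1)
/-- The defining relations (`q`-Dolan/Grady relations) of the `q`-Onsager algebra. -/
inductive OnsagerRel (F : Type*) [Field F] (q : F) :
    FreeAlgebra F (Fin 2) → FreeAlgebra F (Fin 2) → Prop
  | DG1 : OnsagerRel F q (qSerre q (FreeAlgebra.ι F 0) (FreeAlgebra.ι F 1))
      (((q ^ 2 - q⁻¹ ^ 2) ^ 2) •
        (FreeAlgebra.ι F 1 * FreeAlgebra.ι F 0 - FreeAlgebra.ι F 0 * FreeAlgebra.ι F 1))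
  | DG2 : OnsagerRel F q (qSerre q (FreeAlgebra.ι F 1) (FreeAlgebra.ι F 0))
      (((q ^ 2 - q⁻¹ ^ 2) ^ 2) •
        (FreeAlgebra.ι F 0 * FreeAlgebra.ι F 1 - FreeAlgebra.ι F 1 * FreeAlgebra.ι F 0))

/-- The `q`-Onsager algebra `O_q`. -/
abbrev Onsager (F : Type*) [Field F] (q : F) := RingQuot (OnsagerRel F q)

/-- The generator `A` of `O_q`. -/
def Ag (F : Type*) [Field F] (q : F) : Onsager F q :=
  RingQuot.mkAlgHom F (OnsagerRel F q) (FreeAlgebra.ι F 0)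

/-- The generator `B` of `O_q`. -/
def Bg (F : Type*) [Field F] (q : F) : Onsager F q :=
  RingQuot.mkAlgHom F (OnsagerRel F q) (FreeAlgebra.ι F 1)

/-- The degree-`n` component of the free algebra `T` on two generators: the span of the
words of length `n`. -/
def Tdeg (F : Type*) [Field F] (n : ℕ) : Submodule F (FreeAlgebra F (Fin 2)) :=
  Submodule.span F
    {w | ∃ l : List (Fin 2), l.length = n ∧ w = (l.map (FreeAlgebra.ι F)).prod}

/-! ### Noncommutative identities for the `q`-Serre expression -/

theorem qInt_three {F : Type*} [Field F] {q : F} (hq : q ≠ 0) (hq2 : q ^ 2 ≠ 1) :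
    (q ^ 3 - q⁻¹ ^ 3) / (q - q⁻¹) = q ^ 2 + 1 + (q ^ 2)⁻¹ := by
  have h : q - q⁻¹ ≠ 0 := by
    intro h
    apply hq2
    field_simp at h
    linear_combination h
  rw [div_eq_iff h]
  field_simp
  ring

section Identities

variable {F : Type*} [Field F] {q : F} {R : Type*} [Ring R] [Algebra F R]

theorem qSerre_expand (hq : q ≠ 0) (hq2 : q ^ 2 ≠ 1) (u v : R) :
    qSerre q u v = u * (u * (u * v)) - (q ^ 2 + 1 + (q ^ 2)⁻¹) • (u * (u * (v * u)))
      + (q ^ 2 + 1 + (q ^ 2)⁻¹) • (u * (v * (u * u))) - v * (u * (u * u)) := by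
  rw [qSerre, qInt_three hq hq2]
  simp only [pow_succ, pow_zero, one_mul, mul_assoc]

theorem map_qSerre {S : Type*} [Ring S] [Algebra F S] (f : R →ₐ[F] S) (u v : R) :
    f (qSerre q u v) = qSerre q (f u) (f v) := by
  simp only [qSerre, map_sub, map_add, map_smul, map_mul, map_pow]

/-- If `D` is a lowering operator for `X` and `E` merely `q`-commutes with `X`, then the
`q`-Serre expressions in `D` and `E` `q`-commute with `X`: all constant terms cancel. -/
theorem qSerre_lower_mul_raise (hq : q ≠ 0) (hq2 : q ^ 2 ≠ 1) {X D E : R}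
    (hDX : D * X = q ^ 2 • (X * D) + (1 - q ^ 2) • (1 : R))
    (hEX : E * X = (q ^ 2)⁻¹ • (X * E)) :
    qSerre q D E * X = (q ^ 2) ^ 2 • (X * qSerre q D E) ∧
    qSerre q E D * X = (q ^ 2)⁻¹ ^ 2 • (X * qSerre q E D) := by
  have hDX' (w : R) : D * (X * w) = q ^ 2 • (X * (D * w)) + (1 - q ^ 2) • w := by
    rw [← mul_assoc, hDX, add_mul, smul_mul_assoc, smul_mul_assoc, one_mul, mul_assoc]
  have hEX' (w : R) : E * (X * w) = (q ^ 2)⁻¹ • (X * (E * w)) := by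
    rw [← mul_assoc, hEX, smul_mul_assoc, mul_assoc]
  simp only [qSerre_expand hq hq2]
  have ht : q ^ 2 ≠ 0 := pow_ne_zero _ hq
  generalize q ^ 2 = t at *
  constructor <;>
  · simp only [sub_mul, add_mul, mul_sub, mul_add, smul_mul_assoc, mul_smul_comm, mul_assoc, hDX,
      hDX', hEX, hEX', smul_add, mul_one]
    match_scalars <;> field_simp <;> ring

/-- The first `q`-Dolan/Grady relation for `A = X + D` and `B = Y + E`. The constant `1 - q²` in
`DX = q²XD + (1 - q²)` is the one that produces the coefficient `(q² - q⁻²)²`. -/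
theorem qSerre_raise_add_lower (hq : q ≠ 0) (hq2 : q ^ 2 ≠ 1) {X Y D E : R}
    (hDX : D * X = q ^ 2 • (X * D) + (1 - q ^ 2) • (1 : R))
    (hDY : D * Y = (q ^ 2)⁻¹ • (Y * D))
    (hEX : E * X = (q ^ 2)⁻¹ • (X * E))
    (hXY : qSerre q X Y = 0) (hDE : qSerre q D E = 0) :
    qSerre q (X + D) (Y + E) =
      (q ^ 2 - q⁻¹ ^ 2) ^ 2 • ((Y + E) * (X + D) - (X + D) * (Y + E)) := by
  have hDX' (w : R) : D * (X * w) = q ^ 2 • (X * (D * w)) + (1 - q ^ 2) • w := by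
    rw [← mul_assoc, hDX, add_mul, smul_mul_assoc, smul_mul_assoc, one_mul, mul_assoc]
  have hEX' (w : R) : E * (X * w) = (q ^ 2)⁻¹ • (X * (E * w)) := by
    rw [← mul_assoc, hEX, smul_mul_assoc, mul_assoc]
  have hDY' (w : R) : D * (Y * w) = (q ^ 2)⁻¹ • (Y * (D * w)) := by
    rw [← mul_assoc, hDY, smul_mul_assoc, mul_assoc]
  have ht : q ^ 2 ≠ 0 := pow_ne_zero _ hq
  rw [inv_pow]
  rw [qSerre_expand hq hq2] at hXY hDE ⊢
  generalize q ^ 2 = t at *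
  -- Normal ordering: `X` and `Y` are moved to the left of `D` and `E`; the primed rules do this
  -- inside a right-nested product.
  simp only [add_mul, mul_add, mul_smul_comm, hDX, hDX', hEX, hEX', hDY, hDY', smul_add, mul_one]
  linear_combination (norm := skip) hXY + hDE
  match_scalars <;> field_simp <;> ring

/-- Upper triangular matrices satisfying the `q`-Serre relations. The upper right entry of an algebra
map sending `u`, `v` to these matrices is a skew derivation. -/
theorem qSerre_matrix (hq : q ≠ 0) (hq2 : q ^ 2 ≠ 1) {u v : R}
    (huv : qSerre q u v = 0) (hvu : qSerre q v u = 0) (c : F) :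
    qSerre q !![q ^ 2 • u, c • 1; 0, u] !![(q ^ 2)⁻¹ • v, 0; 0, v] = 0 ∧
    qSerre q !![(q ^ 2)⁻¹ • v, 0; 0, v] !![q ^ 2 • u, c • 1; 0, u] = 0 := by
  rw [qSerre_expand hq hq2] at huv hvu ⊢
  rw [qSerre_expand hq hq2]
  have ht : q ^ 2 ≠ 0 := pow_ne_zero _ hq
  generalize q ^ 2 = t at *
  have e : (0 : Matrix (Fin 2) (Fin 2) R) = !![0, 0; 0, 0] := by
    ext i j; fin_cases i <;> fin_cases j <;> rfl
  rw [e]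
  constructor
  · simp only [Matrix.mul_fin_two, Matrix.smul_of, Matrix.smul_cons, Matrix.smul_empty,
      Matrix.of_sub_of, Matrix.of_add_of, Matrix.sub_cons, Matrix.add_cons]
    simp [smul_smul]
    refine ⟨⟨?_, ?_⟩, huv⟩
    · linear_combination (norm := skip) t ^ 2 • huv
      match_scalars <;> field_simp <;> ring
    · simp only [mul_add, mul_smul_comm]
      match_scalars <;> field_simp <;> ring
  · simp only [Matrix.mul_fin_two, Matrix.smul_of, Matrix.smul_cons, Matrix.smul_empty,
      Matrix.of_sub_of, Matrix.of_add_of, Matrix.sub_cons, Matrix.add_cons]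
    simp [smul_smul]
    refine ⟨⟨?_, ?_⟩, hvu⟩
    · linear_combination (norm := skip) (t ^ 2)⁻¹ • hvu
      match_scalars <;> field_simp <;> ring
    · match_scalars
      field_simp
      ring

end Identities

/-! ### Skew derivations of `U⁺_q` -/

section Presentation

variable {F : Type*} [Field F] {q : F}

theorem qSerre_Xg_Yg : qSerre q (Xg F q) (Yg F q) = 0 := by
  rw [Xg, Yg, ← map_qSerre, RingQuot.mkAlgHom_rel F UqPlusRel.serreXY, map_zero]

theorem qSerre_Yg_Xg : qSerre q (Yg F q) (Xg F q) = 0 := by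
  rw [Xg, Yg, ← map_qSerre, RingQuot.mkAlgHom_rel F UqPlusRel.serreYX, map_zero]

theorem exists_uqPlus_lift {R : Type*} [Ring R] [Algebra F R] {x y : R}
    (hxy : qSerre q x y = 0) (hyx : qSerre q y x = 0) :
    ∃ f : UqPlus F q →ₐ[F] R, f (Xg F q) = x ∧ f (Yg F q) = y := by
  refine ⟨RingQuot.liftAlgHom F ⟨FreeAlgebra.lift F ![x, y], ?_⟩, ?_, ?_⟩
  · rintro _ _ (_ | _) <;> simp [map_qSerre, hxy, hyx]
  · simp [Xg]
  · simp [Yg]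

theorem exists_onsager_lift {R : Type*} [Ring R] [Algebra F R] {a b : R}
    (hab : qSerre q a b = (q ^ 2 - q⁻¹ ^ 2) ^ 2 • (b * a - a * b))
    (hba : qSerre q b a = (q ^ 2 - q⁻¹ ^ 2) ^ 2 • (a * b - b * a)) :
    ∃ f : Onsager F q →ₐ[F] R, f (Ag F q) = a ∧ f (Bg F q) = b := by
  refine ⟨RingQuot.liftAlgHom F ⟨FreeAlgebra.lift F ![a, b], ?_⟩, ?_, ?_⟩
  · rintro _ _ (_ | _) <;> simp [map_qSerre, hab, hba]
  · simp [Ag]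
  · simp [Bg]

/-- Induction principle for `U⁺_q`. -/
theorem uqPlus_submodule_eq_top (W : Submodule F (UqPlus F q)) (h1 : 1 ∈ W)
    (hX : ∀ u ∈ W, Xg F q * u ∈ W) (hY : ∀ u ∈ W, Yg F q * u ∈ W) : W = ⊤ := by
  have key (a : FreeAlgebra F (Fin 2)) :
      ∀ w ∈ W, RingQuot.mkAlgHom F (UqPlusRel F q) a * w ∈ W := by
    induction a using FreeAlgebra.induction with
    | grade0 r =>
      intro w hw
      rw [AlgHom.commutes, ← Algebra.smul_def]
      exact W.smul_mem r hw
    | grade1 i =>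
      fin_cases i
      · exact hX
      · exact hY
    | mul a b ha hb =>
      intro w hw
      rw [map_mul, mul_assoc]
      exact ha _ (hb w hw)
    | add a b ha hb =>
      intro w hw
      rw [map_add, add_mul]
      exact W.add_mem (ha w hw) (hb w hw)
  rw [eq_top_iff]
  intro u _
  obtain ⟨a, rfl⟩ := RingQuot.mkAlgHom_surjective F (UqPlusRel F q) u
  simpa using key a 1 h1

/-- Two generators of `U⁺_q` taken in either order. -/
def GenPair (q : F) (u v : UqPlus F q) : Prop :=
  (u = Xg F q ∧ v = Yg F q) ∨ (u = Yg F q ∧ v = Xg F q)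

theorem GenPair.symm {u v : UqPlus F q} (h : GenPair q u v) : GenPair q v u := by
  rcases h with ⟨h, h'⟩ | ⟨h, h'⟩
  · exact Or.inr ⟨h', h⟩
  · exact Or.inl ⟨h', h⟩

theorem GenPair.qSerre_eq_zero {u v : UqPlus F q} (h : GenPair q u v) : qSerre q u v = 0 := by
  rcases h with ⟨rfl, rfl⟩ | ⟨rfl, rfl⟩
  · exact qSerre_Xg_Yg
  · exact qSerre_Yg_Xg

theorem GenPair.eq_top {u v : UqPlus F q} (h : GenPair q u v) (W : Submodule F (UqPlus F q))
    (h1 : 1 ∈ W) (hu : ∀ w ∈ W, u * w ∈ W) (hv : ∀ w ∈ W, v * w ∈ W) : W = ⊤ := by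
  rcases h with ⟨rfl, rfl⟩ | ⟨rfl, rfl⟩
  · exact uqPlus_submodule_eq_top W h1 hu hv
  · exact uqPlus_submodule_eq_top W h1 hv hu

theorem GenPair.exists_lift {u v : UqPlus F q} (h : GenPair q u v)
    {R : Type*} [Ring R] [Algebra F R] {x y : R}
    (hxy : qSerre q x y = 0) (hyx : qSerre q y x = 0) :
    ∃ f : UqPlus F q →ₐ[F] R, f u = x ∧ f v = y := by
  rcases h with ⟨rfl, rfl⟩ | ⟨rfl, rfl⟩
  · exact exists_uqPlus_lift hxy hyx
  · exact (exists_uqPlus_lift hyx hxy).imp fun f hf => hf.symm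

/-- The skew derivation `D` of `U⁺_q` with `D(u) = 1 - q²` and `D(v) = 0`, in the form of Kashiwara's
`q`-boson operators. -/
theorem GenPair.exists_skew (hq : q ≠ 0) (hq2 : q ^ 2 ≠ 1) {u v : UqPlus F q}
    (h : GenPair q u v) :
    ∃ D : Module.End F (UqPlus F q), D 1 = 0 ∧
      (∀ w, D (u * w) = q ^ 2 • (u * D w) + (1 - q ^ 2) • w) ∧
      (∀ w, D (v * w) = (q ^ 2)⁻¹ • (v * D w)) := by
  obtain ⟨h1, h2⟩ := qSerre_matrix hq hq2 h.qSerre_eq_zero h.symm.qSerre_eq_zero (1 - q ^ 2)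
  obtain ⟨f, hu, hv⟩ := h.exists_lift h1 h2
  let W : Submodule F (UqPlus F q) :=
    { carrier := {w | f w 1 0 = 0 ∧ f w 1 1 = w}
      add_mem' := by
        rintro a b ⟨ha, ha'⟩ ⟨hb, hb'⟩
        simp [ha, ha', hb, hb']
      zero_mem' := by simp
      smul_mem' := by
        rintro c a ⟨ha, ha'⟩
        simp [ha, ha'] }
  have hW : W = ⊤ := by
    apply h.eq_top
    · simp [W]
    · rintro w ⟨hw, hw'⟩
      simp [W, hu, Matrix.mul_apply, Fin.sum_univ_two, hw, hw']
    · rintro w ⟨hw, hw'⟩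
      simp [W, hv, Matrix.mul_apply, Fin.sum_univ_two, hw, hw']
  have hf (w) : f w 1 1 = w := (hW ▸ Submodule.mem_top : w ∈ W).2
  refine ⟨(Matrix.entryLinearMap F (UqPlus F q) 0 1).comp f.toLinearMap, ?_, ?_, ?_⟩
  · simp
  · intro w
    simp [hu, Matrix.vecMul, dotProduct, Fin.sum_univ_two, hf]
  · intro w
    simp [hv, Matrix.vecMul, dotProduct, Fin.sum_univ_two]

/-- An operator that `q`-commutes with both generators vanishes as soon as it kills `1`. -/
theorem GenPair.end_eq_zero {u v : UqPlus F q} (h : GenPair q u v)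
    {G : Module.End F (UqPlus F q)} {a b : F} (h1 : G 1 = 0)
    (hu : G * LinearMap.mulLeft F u = a • (LinearMap.mulLeft F u * G))
    (hv : G * LinearMap.mulLeft F v = b • (LinearMap.mulLeft F v * G)) : G = 0 := by
  rw [← LinearMap.ker_eq_top]
  refine h.eq_top _ h1 ?_ ?_
  · intro w hw
    rw [LinearMap.mem_ker] at hw ⊢
    simpa [hw] using LinearMap.congr_fun hu w
  · intro w hw
    rw [LinearMap.mem_ker] at hw ⊢
    simpa [hw] using LinearMap.congr_fun hv w

/-- The two skew derivations attached to the two generators satisfy the `q`-Serre relation. -/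
theorem GenPair.qSerre_skew_eq_zero (hq : q ≠ 0) (hq2 : q ^ 2 ≠ 1) {u v : UqPlus F q}
    (h : GenPair q u v) {D E : Module.End F (UqPlus F q)} (hD1 : D 1 = 0) (hE1 : E 1 = 0)
    (hDu : ∀ w, D (u * w) = q ^ 2 • (u * D w) + (1 - q ^ 2) • w)
    (hDv : ∀ w, D (v * w) = (q ^ 2)⁻¹ • (v * D w))
    (hEv : ∀ w, E (v * w) = q ^ 2 • (v * E w) + (1 - q ^ 2) • w)
    (hEu : ∀ w, E (u * w) = (q ^ 2)⁻¹ • (u * E w)) :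
    qSerre q D E = 0 := by
  refine h.end_eq_zero ?_
    (qSerre_lower_mul_raise hq hq2 (LinearMap.ext hDu) (LinearMap.ext hEu)).1
    (qSerre_lower_mul_raise hq hq2 (LinearMap.ext hEv) (LinearMap.ext hDv)).2
  simp [qSerre_expand hq hq2, hD1, hE1]

end Presentation

/-! ### Word length: filtration and grading -/

section Filtration

variable {F : Type*} [Field F] {R : Type*} [Ring R] [Algebra F R]

/-- The span of the images under `f` of the words of length `< n`. -/
def lowSpan (f : FreeAlgebra F (Fin 2) →ₐ[F] R) (n : ℕ) : Submodule F R :=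
  Submodule.span F {r | ∃ l : List (Fin 2), l.length < n ∧ r = f (l.map (FreeAlgebra.ι F)).prod}

variable {f : FreeAlgebra F (Fin 2) →ₐ[F] R}

theorem word_mem_lowSpan {n : ℕ} {l : List (Fin 2)} (h : l.length < n) :
    f (l.map (FreeAlgebra.ι F)).prod ∈ lowSpan f n :=
  Submodule.subset_span ⟨l, h, rfl⟩

theorem lowSpan_mono {m n : ℕ} (h : m ≤ n) : lowSpan f m ≤ lowSpan f n :=
  Submodule.span_mono fun _ ⟨l, hl, hr⟩ => ⟨l, hl.trans_le h, hr⟩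

theorem lowSpan_le {n : ℕ} {W : Submodule F R}
    (h : ∀ l : List (Fin 2), l.length < n → f (l.map (FreeAlgebra.ι F)).prod ∈ W) :
    lowSpan f n ≤ W :=
  Submodule.span_le.2 fun _ ⟨l, hl, hr⟩ => hr ▸ h l hl

theorem gen_mul_mem_lowSpan (i : Fin 2) {n : ℕ} {r : R} (hr : r ∈ lowSpan f n) :
    f (FreeAlgebra.ι F i) * r ∈ lowSpan f (n + 1) := by
  have : lowSpan f n ≤ (lowSpan f (n + 1)).comap (LinearMap.mulLeft F (f (FreeAlgebra.ι F i))) := by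
    refine lowSpan_le fun l hl => ?_
    have := word_mem_lowSpan (f := f) (n := n + 1) (l := i :: l) (by simpa using hl)
    simpa using this
  exact this hr

theorem mul_gen_mem_lowSpan (i : Fin 2) {n : ℕ} {r : R} (hr : r ∈ lowSpan f n) :
    r * f (FreeAlgebra.ι F i) ∈ lowSpan f (n + 1) := by
  have : lowSpan f n ≤
      (lowSpan f (n + 1)).comap (LinearMap.mulRight F (f (FreeAlgebra.ι F i))) := by
    refine lowSpan_le fun l hl => ?_
    have := word_mem_lowSpan (f := f) (n := n + 1) (l := l ++ [i]) (by simpa using hl)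
    simpa using this
  exact this hr

theorem Tdeg_induction {n : ℕ} {W : Submodule F (FreeAlgebra F (Fin 2))}
    (h : ∀ l : List (Fin 2), l.length = n → (l.map (FreeAlgebra.ι F)).prod ∈ W) :
    Tdeg F n ≤ W :=
  Submodule.span_le.2 fun _ ⟨l, hl, hr⟩ => hr ▸ h l hl

theorem eq_top_of_Tdeg_le {W : Submodule F (FreeAlgebra F (Fin 2))} (h : ∀ n, Tdeg F n ≤ W) :
    W = ⊤ := by
  let V := Submodule.span F (Set.range fun l : List (Fin 2) => (l.map (FreeAlgebra.ι F)).prod)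
  have key (a : FreeAlgebra F (Fin 2)) : ∀ w ∈ V, a * w ∈ V := by
    induction a using FreeAlgebra.induction with
    | grade0 r =>
      intro w hw
      rw [← Algebra.smul_def]
      exact V.smul_mem r hw
    | grade1 i =>
      intro w hw
      have : V ≤ V.comap (LinearMap.mulLeft F (FreeAlgebra.ι F i)) := by
        refine Submodule.span_le.2 ?_
        rintro _ ⟨l, rfl⟩
        exact Submodule.subset_span ⟨i :: l, by simp⟩
      exact this hw
    | mul a b ha hb =>
      intro w hw
      rw [mul_assoc]
      exact ha _ (hb w hw)
    | add a b ha hb =>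
      intro w hw
      rw [add_mul]
      exact V.add_mem (ha w hw) (hb w hw)
  rw [eq_top_iff]
  intro t _
  have hV : V ≤ W := Submodule.span_le.2 <| by
    rintro _ ⟨l, rfl⟩
    exact h l.length (Submodule.subset_span ⟨l, rfl, rfl⟩)
  simpa using hV (key t 1 (Submodule.subset_span ⟨[], by simp⟩))

open Polynomial in
/-- An algebra map to `R[z]` sending each generator `x` to `f(x)z` sends every `t ∈ T_n`
to `f(t)zⁿ`. -/
theorem graded_apply {G : FreeAlgebra F (Fin 2) →ₐ[F] R[X]}
    (hG : ∀ i, G (FreeAlgebra.ι F i) = monomial 1 (f (FreeAlgebra.ι F i)))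
    {n : ℕ} {t : FreeAlgebra F (Fin 2)} (ht : t ∈ Tdeg F n) : G t = monomial n (f t) := by
  have hword (l : List (Fin 2)) : G (l.map (FreeAlgebra.ι F)).prod =
      monomial l.length (f (l.map (FreeAlgebra.ι F)).prod) := by
    induction l with
    | nil => simp
    | cons i l ih =>
      simp [hG, ih, monomial_mul_monomial, add_comm]
  induction ht using Submodule.span_induction with
  | mem t h =>
    obtain ⟨l, rfl, rfl⟩ := h
    exact hword l
  | zero => simp
  | add a b _ _ ha hb => simp [ha, hb]
  | smul c a _ ha => rw [map_smul, map_smul, ha, smul_monomial]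

open Polynomial in
theorem qSerre_monomial (q : F) (u v : R) :
    qSerre q (monomial 1 u) (monomial 1 v) = monomial 4 (qSerre q u v) := by
  simp only [qSerre, monomial_pow, monomial_mul_monomial, smul_monomial, map_sub, map_add]

end Filtration

/-! ### Comparison of `O_q` with `U⁺_q` -/

section Comparison

variable {F : Type*} [Field F] {q : F}

variable (F q) in
/-- The quotient map `μ : T → U⁺_q`. -/
abbrev muHom : FreeAlgebra F (Fin 2) →ₐ[F] UqPlus F q := RingQuot.mkAlgHom F (UqPlusRel F q)

variable (F q) in
/-- The quotient map `ν : T → O_q`. -/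
abbrev nuHom : FreeAlgebra F (Fin 2) →ₐ[F] Onsager F q := RingQuot.mkAlgHom F (OnsagerRel F q)

variable (F q) in
open Polynomial in
/-- The projection of `U⁺_q` onto its degree-`n` component: the coefficient of `zⁿ` under the algebra
map `U⁺_q → U⁺_q[z]`, `X ↦ Xz`, `Y ↦ Yz`. -/
theorem exists_proj (n : ℕ) : ∃ p : UqPlus F q →ₗ[F] UqPlus F q,
    (∀ t ∈ Tdeg F n, p (muHom F q t) = muHom F q t) ∧
    (∀ m ≠ n, ∀ t ∈ Tdeg F m, p (muHom F q t) = 0) := by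
  obtain ⟨G, hX, hY⟩ := exists_uqPlus_lift (q := q)
    (x := (monomial 1 (Xg F q) : (UqPlus F q)[X])) (y := monomial 1 (Yg F q))
    (by rw [qSerre_monomial, qSerre_Xg_Yg, map_zero])
    (by rw [qSerre_monomial, qSerre_Yg_Xg, map_zero])
  have hG : ∀ i, G.comp (muHom F q) (FreeAlgebra.ι F i) =
      monomial 1 (muHom F q (FreeAlgebra.ι F i)) := by
    intro i
    fin_cases i
    · exact hX
    · exact hY
  have hp (m) {t} (ht : t ∈ Tdeg F m) : G (muHom F q t) = monomial m (muHom F q t) :=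
    graded_apply (f := muHom F q) hG ht
  refine ⟨{ toFun := fun u => (G u).coeff n
            map_add' := fun a b => by simp
            map_smul' := fun a b => by simp }, fun t ht => ?_, fun m hm t ht => ?_⟩
  · simp [hp n ht]
  · simp [hp m ht, coeff_monomial, hm]

theorem proj_lowSpan_eq_zero {n : ℕ} {p : UqPlus F q →ₗ[F] UqPlus F q}
    (hp : ∀ m ≠ n, ∀ t ∈ Tdeg F m, p (muHom F q t) = 0) {m : ℕ} (hm : m ≤ n)
    {u : UqPlus F q} (hu : u ∈ lowSpan (muHom F q) m) : p u = 0 := by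
  have : lowSpan (muHom F q) m ≤ LinearMap.ker p :=
    lowSpan_le fun l hl => hp l.length (by lia) _ (Submodule.subset_span ⟨l, rfl, rfl⟩)
  exact this hu

theorem skew_mem_lowSpan {D : Module.End F (UqPlus F q)} (h1 : D 1 = 0) {a b : Fin 2 → F}
    (hD : ∀ i w, D (muHom F q (FreeAlgebra.ι F i) * w) =
      a i • (muHom F q (FreeAlgebra.ι F i) * D w) + b i • w)
    {n : ℕ} {u : UqPlus F q} (hu : u ∈ lowSpan (muHom F q) n) :
    D u ∈ lowSpan (muHom F q) n := by
  have hword (l : List (Fin 2)) : ∀ n, l.length < n →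
      D (muHom F q (l.map (FreeAlgebra.ι F)).prod) ∈ lowSpan (muHom F q) n := by
    induction l with
    | nil => simp [h1]
    | cons i l ih =>
      intro n hn
      obtain ⟨m, rfl⟩ : ∃ m, n = m + 1 := ⟨n - 1, by lia⟩
      have hl : l.length < m := by simpa using hn
      rw [List.map_cons, List.prod_cons, map_mul, hD]
      exact add_mem (Submodule.smul_mem _ _ (gen_mul_mem_lowSpan i (ih m hl)))
        (Submodule.smul_mem _ _ (word_mem_lowSpan (by lia)))
  have : lowSpan (muHom F q) n ≤ (lowSpan (muHom F q) n).comap D :=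
    lowSpan_le fun l hl => hword l n hl
  exact this hu

variable (F) in
/-- `O_q` acts on `U⁺_q`, each generator acting as left multiplication by the corresponding
generator of `U⁺_q` plus an operator that does not raise the degree. -/
theorem exists_action (hq : q ≠ 0) (hq2 : q ^ 2 ≠ 1) :
    ∃ ρ : Onsager F q →ₐ[F] Module.End F (UqPlus F q), ∀ i : Fin 2,
      ∃ D : Module.End F (UqPlus F q),
        (∀ n, ∀ u ∈ lowSpan (muHom F q) n, D u ∈ lowSpan (muHom F q) n) ∧
        ρ (nuHom F q (FreeAlgebra.ι F i)) =
          LinearMap.mulLeft F (muHom F q (FreeAlgebra.ι F i)) + D := by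
  have h : GenPair q (Xg F q) (Yg F q) := Or.inl ⟨rfl, rfl⟩
  obtain ⟨D, hD1, hDX, hDY⟩ := h.exists_skew hq hq2
  obtain ⟨E, hE1, hEY, hEX⟩ := h.symm.exists_skew hq hq2
  have hDE := h.qSerre_skew_eq_zero hq hq2 hD1 hE1 hDX hDY hEY hEX
  have hED := h.symm.qSerre_skew_eq_zero hq hq2 hE1 hD1 hEY hEX hDX hDY
  have hL (u v : UqPlus F q) (huv : qSerre q u v = 0) :
      qSerre q (LinearMap.mulLeft F u) (LinearMap.mulLeft F v) = 0 := by
    have := map_qSerre (q := q) (S := Module.End F (UqPlus F q)) (Algebra.lmul F (UqPlus F q)) u v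
    rw [huv, map_zero] at this
    exact this.symm
  obtain ⟨ρ, hA, hB⟩ := exists_onsager_lift
    (qSerre_raise_add_lower hq hq2 (LinearMap.ext hDX) (LinearMap.ext hDY) (LinearMap.ext hEX)
      (hL _ _ qSerre_Xg_Yg) hDE)
    (qSerre_raise_add_lower hq hq2 (LinearMap.ext hEY) (LinearMap.ext hEX) (LinearMap.ext hDY)
      (hL _ _ qSerre_Yg_Xg) hED)
  refine ⟨ρ, fun i => ?_⟩
  fin_cases i
  · refine ⟨D, fun n u hu => ?_, hA⟩
    refine skew_mem_lowSpan hD1 (a := ![q ^ 2, (q ^ 2)⁻¹]) (b := ![1 - q ^ 2, 0]) ?_ hu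
    intro i w
    fin_cases i
    · exact hDX w
    · exact (hDY w).trans (by simp [Yg])
  · refine ⟨E, fun n u hu => ?_, hB⟩
    refine skew_mem_lowSpan hE1 (a := ![(q ^ 2)⁻¹, q ^ 2]) (b := ![0, 1 - q ^ 2]) ?_ hu
    intro i w
    fin_cases i
    · exact (hEX w).trans (by simp [Xg])
    · exact hEY w

variable (F) in
/-- A linear map `O_q → U⁺_q` taking `ν(t)` to `μ(t)` modulo lower degree for every homogeneous `t`:
the action of `O_q` on `1 ∈ U⁺_q`. -/
theorem exists_symbol (hq : q ≠ 0) (hq2 : q ^ 2 ≠ 1) :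
    ∃ σ : Onsager F q →ₗ[F] UqPlus F q, ∀ n, ∀ t ∈ Tdeg F n,
      σ (nuHom F q t) - muHom F q t ∈ lowSpan (muHom F q) n := by
  obtain ⟨ρ, hρ⟩ := exists_action F hq hq2
  refine ⟨(LinearMap.applyₗ (1 : UqPlus F q)).comp ρ.toLinearMap, fun n t ht => ?_⟩
  have hword (l : List (Fin 2)) :
      ρ (nuHom F q (l.map (FreeAlgebra.ι F)).prod) 1 - muHom F q (l.map (FreeAlgebra.ι F)).prod ∈
        lowSpan (muHom F q) l.length := by
    induction l with
    | nil => simp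
    | cons i l ih =>
      obtain ⟨D, hD, hi⟩ := hρ i
      simp only [List.map_cons, List.prod_cons, map_mul, List.length_cons, hi, Module.End.mul_apply,
        LinearMap.add_apply, LinearMap.mulLeft_apply]
      rw [add_sub_right_comm, ← mul_sub]
      refine add_mem (gen_mul_mem_lowSpan i ih) (hD _ _ ?_)
      rw [← sub_add_cancel (ρ _ _) (muHom F q (l.map (FreeAlgebra.ι F)).prod)]
      exact add_mem (lowSpan_mono (Nat.le_succ _) ih) (word_mem_lowSpan (Nat.lt_succ_self _))
  have : Tdeg F n ≤ (lowSpan (muHom F q) n).comap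
      ((LinearMap.applyₗ (1 : UqPlus F q)).comp (ρ.comp (nuHom F q)).toLinearMap -
        (muHom F q).toLinearMap) :=
    Tdeg_induction fun l hl => by
      subst hl
      exact hword l
  exact this ht

/-- The kernel of `μ` is contained in every two-sided ideal containing the two `q`-Serre
expressions. -/
theorem mem_of_muHom_eq_zero {K : TwoSidedIdeal (FreeAlgebra F (Fin 2))}
    (hxy : qSerre q (FreeAlgebra.ι F 0) (FreeAlgebra.ι F 1) ∈ K)
    (hyx : qSerre q (FreeAlgebra.ι F 1) (FreeAlgebra.ι F 0) ∈ K)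
    {t : FreeAlgebra F (Fin 2)} (ht : muHom F q t = 0) : t ∈ K := by
  have hr : ∀ ⦃a b⦄, UqPlusRel F q a b → K.ringCon.mk' a = K.ringCon.mk' b := by
    rintro _ _ (_ | _)
    · exact (RingCon.eq _).2 hxy
    · exact (RingCon.eq _).2 hyx
  have h := RingQuot.lift_mkRingHom_apply K.ringCon.mk' hr t
  rw [← RingQuot.mkAlgHom_coe F, AlgHom.coe_toRingHom, ht, map_zero] at h
  exact (RingCon.eq _).1 h.symm

open Polynomial in
/-- A homogeneous element of the kernel of `μ` is sent by `ν` to lower degree. Indeed, for the algebra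
map `θ : T → O_q[z]` with `x ↦ Az`, `y ↦ Bz`, the elements `t` such that every `zᵐ`-coefficient of
`θ(t)` comes from words of length `< m` form a two-sided ideal, which contains the `q`-Serre
expressions by the `q`-Dolan/Grady relations. -/
theorem nuHom_mem_lowSpan {n : ℕ} {t : FreeAlgebra F (Fin 2)} (ht : t ∈ Tdeg F n)
    (h0 : muHom F q t = 0) : nuHom F q t ∈ lowSpan (nuHom F q) n := by
  let θ : FreeAlgebra F (Fin 2) →ₐ[F] (Onsager F q)[X] :=
    FreeAlgebra.lift F fun i => monomial 1 (nuHom F q (FreeAlgebra.ι F i))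
  have hθ (i) : θ (FreeAlgebra.ι F i) = monomial 1 (nuHom F q (FreeAlgebra.ι F i)) := by
    simp [θ]
  let K : TwoSidedIdeal (FreeAlgebra F (Fin 2)) := TwoSidedIdeal.mk'
    {t | ∀ n, (θ t).coeff n ∈ lowSpan (nuHom F q) n}
    (by simp)
    (fun {a b} ha hb n => by simpa using add_mem (ha n) (hb n))
    (fun {a} ha n => by simpa using ha n)
    (by
      intro a b hb
      induction a using FreeAlgebra.induction generalizing b with
      | grade0 r =>
        intro n
        simpa [← Algebra.smul_def] using Submodule.smul_mem _ r (hb n)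
      | grade1 i =>
        rintro (_ | n)
        · simp [hθ, mul_coeff_zero]
        · rw [map_mul, hθ, ← C_mul_X_eq_monomial, mul_assoc, coeff_C_mul, X_mul, coeff_mul_X]
          exact gen_mul_mem_lowSpan i (hb n)
      | mul c d hc hd =>
        rw [mul_assoc]
        exact hc (hd hb)
      | add c d hc hd =>
        intro n
        rw [add_mul, map_add, coeff_add]
        exact add_mem (hc hb n) (hd hb n))
    (by
      intro b a hb
      induction a using FreeAlgebra.induction generalizing b with
      | grade0 r =>
        intro n
        rw [← Algebra.commutes]
        simpa [← Algebra.smul_def] using Submodule.smul_mem _ r (hb n)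
      | grade1 i =>
        rintro (_ | n)
        · simp [hθ, mul_coeff_zero]
        · rw [map_mul, hθ, ← C_mul_X_eq_monomial, ← mul_assoc, coeff_mul_X, coeff_mul_C]
          exact mul_gen_mem_lowSpan i (hb n)
      | mul c d hc hd =>
        rw [← mul_assoc]
        exact hd (hc hb)
      | add c d hc hd =>
        intro n
        rw [mul_add, map_add, coeff_add]
        exact add_mem (hc hb n) (hd hb n))
  have hcomm (i j : Fin 2) : nuHom F q (FreeAlgebra.ι F i * FreeAlgebra.ι F j) ∈
      lowSpan (nuHom F q) 4 := by
    simpa using word_mem_lowSpan (f := nuHom F q) (n := 4) (l := [i, j]) (by simp)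
  have hK (i j : Fin 2)
      (hij : OnsagerRel F q (qSerre q (FreeAlgebra.ι F i) (FreeAlgebra.ι F j))
        (((q ^ 2 - q⁻¹ ^ 2) ^ 2) • (FreeAlgebra.ι F j * FreeAlgebra.ι F i -
          FreeAlgebra.ι F i * FreeAlgebra.ι F j))) :
      qSerre q (FreeAlgebra.ι F i) (FreeAlgebra.ι F j) ∈ K := by
    rw [TwoSidedIdeal.mem_mk']
    intro n
    have h1 := map_qSerre (q := q) (S := (Onsager F q)[X]) θ (FreeAlgebra.ι F i) (FreeAlgebra.ι F j)
    have h2 := map_qSerre (q := q) (S := Onsager F q) (nuHom F q) (FreeAlgebra.ι F i)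
      (FreeAlgebra.ι F j)
    rw [h1, hθ, hθ, qSerre_monomial, ← h2, RingQuot.mkAlgHom_rel F hij,
      coeff_monomial]
    split_ifs with h
    · subst h
      rw [map_smul, map_sub]
      exact Submodule.smul_mem _ _ (sub_mem (hcomm j i) (hcomm i j))
    · exact zero_mem _
  have ht' := mem_of_muHom_eq_zero (hK 0 1 OnsagerRel.DG1) (hK 1 0 OnsagerRel.DG2) h0
  rw [TwoSidedIdeal.mem_mk'] at ht'
  have := ht' n
  rwa [graded_apply hθ ht, coeff_monomial, if_pos rfl] at this

end Comparison

/-- Proposition 4.5: if `Ω` is a homogeneous subset of the free algebra `T` such that the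
vectors `μ(z)` (`z ∈ Ω`) form a basis of `U⁺_q`, then the vectors `ν(z)` (`z ∈ Ω`) form a
basis of `O_q`. -/
theorem stmt1 (F : Type*) [Field F] (q : F) (hq : q ≠ 0) (hq2 : q ^ 2 ≠ 1)
    (Ω : Set (FreeAlgebra F (Fin 2))) (hΩ : ∀ z ∈ Ω, ∃ n : ℕ, z ∈ Tdeg F n)
    (μ : FreeAlgebra F (Fin 2) →ₐ[F] UqPlus F q)
    (hμ : μ = FreeAlgebra.lift F ![Xg F q, Yg F q])
    (ν : FreeAlgebra F (Fin 2) →ₐ[F] Onsager F q)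
    (hν : ν = FreeAlgebra.lift F ![Ag F q, Bg F q])
    (hind : LinearIndependent F (fun z : Ω => μ z))
    (hspan : Submodule.span F (μ '' Ω) = ⊤) :
    LinearIndependent F (fun z : Ω => ν z) ∧ Submodule.span F (ν '' Ω) = ⊤ := by
  have hμ' : μ = muHom F q := by
    subst hμ
    ext i
    fin_cases i <;> simp [Xg, Yg]
  have hν' : ν = nuHom F q := by
    subst hν
    ext i
    fin_cases i <;> simp [Ag, Bg]
  clear hμ hν
  subst hμ' hν'
  classical
  choose! d hd using hΩ
  constructor
  · obtain ⟨σ, hσ⟩ := exists_symbol F hq hq2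
    rw [linearIndependent_iff'] at hind ⊢
    intro s c hc
    by_contra! hne
    obtain ⟨z, hz⟩ := hne
    -- Among the terms with nonzero coefficient, those of maximal degree `d z₀` give a relation
    -- between the `μ(z)`.
    obtain ⟨z₀, hz₀, hmax⟩ := Finset.exists_max_image (s.filter fun z : Ω => c z ≠ 0)
      (fun z : Ω => d z)
      ⟨z, by simpa using hz⟩
    rw [Finset.mem_filter] at hz₀
    obtain ⟨p, hp, hp0⟩ := exists_proj F q (d z₀)
    refine hz₀.2 ?_
    have hsum : ∑ z ∈ s.filter (fun z : Ω => d z = d z₀), c z • muHom F q z = 0 := by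
      have := congrArg (fun o => p (σ o)) hc
      simp only [map_sum, map_smul, map_zero] at this
      rw [Finset.sum_filter]
      refine Eq.trans ?_ this
      refine Finset.sum_congr rfl fun z hz => ?_
      by_cases hcz : c z = 0
      · simp [hcz]
      have hle : d z ≤ d z₀ := hmax z (by simp [hz, hcz])
      have hlow := proj_lowSpan_eq_zero hp0 hle (hσ (d z) z (hd z z.2))
      rw [map_sub, sub_eq_zero] at hlow
      rw [hlow]
      split_ifs with h
      · rw [hp _ (h ▸ hd z z.2)]
      · rw [hp0 _ h _ (hd z z.2), smul_zero]
    exact hind _ c hsum z₀ (by simp [hz₀.1])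
  · have key : ∀ n, ∀ t ∈ Tdeg F n, nuHom F q t ∈ Submodule.span F (nuHom F q '' Ω) := by
      intro n
      induction n using Nat.strong_induction_on with
      | _ n ih =>
        intro t ht
        obtain ⟨p, hp, hp0⟩ := exists_proj F q n
        -- The degree-`n` part of the expansion of `μ(t)` in the basis is still in the span of `Ω`.
        have hW : Submodule.span F (muHom F q '' Ω) ≤
            ((Submodule.span F Ω ⊓ Tdeg F n).map (muHom F q).toLinearMap).comap p := by
          rw [Submodule.span_le]
          rintro _ ⟨z, hz, rfl⟩
          by_cases h : d z = n
          · refine ⟨z, ⟨Submodule.subset_span hz, h ▸ hd z hz⟩, ?_⟩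
            exact (hp z (h ▸ hd z hz)).symm
          · exact ⟨0, zero_mem _, by simpa using (hp0 _ h _ (hd z hz)).symm⟩
        obtain ⟨s, ⟨hs, hsn⟩, hst⟩ := hW (hspan ▸ Submodule.mem_top : muHom F q t ∈ _)
        rw [hp t ht] at hst
        have hlow := nuHom_mem_lowSpan (q := q) (sub_mem ht hsn)
          (by rw [map_sub, sub_eq_zero]; exact hst.symm)
        rw [← sub_add_cancel t s, map_add]
        refine add_mem (lowSpan_le (fun l hl => ?_) hlow) ?_
        · exact ih l.length hl _ (Submodule.subset_span ⟨l, rfl, rfl⟩)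
        · have := Submodule.mem_map_of_mem (f := (nuHom F q).toLinearMap) hs
          rw [Submodule.map_span] at this
          exact this
    rw [eq_top_iff]
    intro o _
    obtain ⟨t, rfl⟩ := RingQuot.mkAlgHom_surjective F (OnsagerRel F q) o
    have := eq_top_of_Tdeg_le
      (W := (Submodule.span F (nuHom F q '' Ω)).comap (nuHom F q).toLinearMap) key
    exact (this ▸ Submodule.mem_top : t ∈ _)
end
end

section
/- Let a, b be nonzero elements of F. Then the F-algebra homomorphism ♯ : O_q → □_q that sends A ↦ a x₀ + a⁻¹ x₁ and B ↦ b x₂ + b⁻¹ x₃ is injective. -/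
/-!
The leading-term argument: filter `O_q` by degree in `A, B`, and let `U⁺` be the algebra on `X, Y`
with the cubic `q`-Serre relations.

* `□_q` acts on `U⁺`: the generators `x₀, x₂` act by left multiplication by `X, Y`, and `x₁, x₃` by
  skew derivations that lower the degree by one (`Up.boxRep`). The Weyl relations dictate the skew
  derivations; the remaining point is that these derivations are well defined on `U⁺`
  (`serre_mat`) and satisfy the `q`-Serre relations themselves (`Up.serre_D`). Both hold because an
  element that skew-commutes with `x` and `y` also skew-commutes with the Serre expression in `x, y`
  (`comm_sSerre`).
* Through `♯`, the generator `A` acts on `U⁺` as `a X` plus an operator of lower degree, and `B` as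
  `b Y` plus an operator of lower degree. So if `p` is homogeneous of degree `n`, then
  `p(A, B) · 1` has leading term `p(a X, b Y)` (`Up.act_homog`). Since `U⁺` is graded, an element
  of `O_q` that kills `1` has a leading part `p` with `p(a X, b Y) = 0`.
* The Dolan/Grady relations reduce to the `q`-Serre relations in the associated graded algebra of
  `O_q`, so that algebra is a quotient of `U⁺`, and `p(a X, b Y) = 0` forces `p(A, B)` to have degree
  less than `n` (`low_of_ev_eq_zero`).

Descending on the degree, an element of the kernel of `♯` is a scalar, hence zero
(`Up.act_faithful`).
-/

noncomputable section

/-- The defining relations of the algebra `□_q`. -/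
inductive BoxRel (F : Type*) [Field F] (q : F) :
    FreeAlgebra F (ZMod 4) → FreeAlgebra F (ZMod 4) → Prop
  | weyl (i : ZMod 4) : BoxRel F q
      ((q - q⁻¹)⁻¹ • (q • (FreeAlgebra.ι F i * FreeAlgebra.ι F (i + 1))
        - q⁻¹ • (FreeAlgebra.ι F (i + 1) * FreeAlgebra.ι F i))) 1
  | serre (i : ZMod 4) : BoxRel F q (qSerre q (FreeAlgebra.ι F i) (FreeAlgebra.ι F (i + 2))) 0

/-- The algebra `□_q`. -/
abbrev Box (F : Type*) [Field F] (q : F) := RingQuot (BoxRel F q)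

/-- The generators `x_i` of `□_q`. -/
def bx (F : Type*) [Field F] (q : F) (i : ZMod 4) : Box F q :=
  RingQuot.mkAlgHom F (BoxRel F q) (FreeAlgebra.ι F i)

/-! ### The Serre expression and skew-commutation -/

/-- The `q`-Serre expression in terms of `s = q²`, so that `[3]_q = s + 1 + s⁻¹`. It is symmetric
under `s ↦ s⁻¹`. -/
def sSerre {F : Type*} [Field F] (s : F) {R : Type*} [Ring R] [Algebra F R] (u v : R) : R :=
  u * u * u * v - (s + 1 + s⁻¹) • (u * u * v * u) + (s + 1 + s⁻¹) • (u * v * u * u) - v * u * u * u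

theorem qSerre_eq_sSerre {F : Type*} [Field F] {q : F} (hq : q ≠ 0) (hq2 : q ^ 2 ≠ 1)
    {R : Type*} [Ring R] [Algebra F R] (u v : R) : qSerre q u v = sSerre (q ^ 2) u v := by
  have h : q ^ 2 - 1 ≠ 0 := sub_ne_zero.2 hq2
  have h' : q - q⁻¹ ≠ 0 := by
    intro h0; apply h
    have : q * (q - q⁻¹) = 0 := by rw [h0, mul_zero]
    rw [← this]; field_simp
  have h3 : (q ^ 3 - q⁻¹ ^ 3) / (q - q⁻¹) = q ^ 2 + 1 + (q ^ 2)⁻¹ := by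
    rw [div_eq_iff h']; field_simp; ring
  simp only [qSerre, sSerre, h3]
  simp only [pow_succ, pow_zero, one_mul, mul_assoc]

theorem sSerre_inv {F : Type*} [Field F] (s : F) {R : Type*} [Ring R] [Algebra F R] (u v : R) :
    sSerre s⁻¹ u v = sSerre s u v := by
  simp only [sSerre, inv_inv, add_comm, add_left_comm]

theorem map_sSerre {F : Type*} [Field F] (s : F) {R R' : Type*} [Ring R] [Algebra F R]
    [Ring R'] [Algebra F R'] (φ : R →ₐ[F] R') (u v : R) :
    φ (sSerre s u v) = sSerre s (φ u) (φ v) := by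
  simp [sSerre]

/-- An element `d` that skew-commutes with `x` and `y` up to the scalars `s - 1` and `1 - s⁻¹`
skew-commutes with the Serre expression with no correction term: all lower-order terms cancel. -/
theorem comm_sSerre {F : Type*} [Field F] {s : F} (hs : s ≠ 0) {R : Type*} [Ring R] [Algebra F R]
    {d x y : R} (hx : d * x = s • (x * d) - (s - 1) • 1)
    (hy : d * y = s⁻¹ • (y * d) + (1 - s⁻¹) • 1) :
    d * sSerre s x y = s ^ 2 • (sSerre s x y * d) := by
  have hx' : ∀ w, d * (x * w) = s • (x * (d * w)) - (s - 1) • w := fun w => by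
    rw [← mul_assoc, hx]; simp [sub_mul, mul_assoc]
  have hy' : ∀ w, d * (y * w) = s⁻¹ • (y * (d * w)) + (1 - s⁻¹) • w := fun w => by
    rw [← mul_assoc, hy]; simp [add_mul, mul_assoc]
  simp only [sSerre, mul_assoc, mul_add, mul_sub, add_mul, sub_mul, mul_smul_comm, smul_mul_assoc,
    hx', hy', hx, hy, mul_one, smul_add, smul_sub]
  match_scalars <;> field_simp <;> ring

/-- The matrix `[[t x, -(t - 1)], [0, x]]`. The assignment `X ↦ skewMat t X`,
`Y ↦ skewMat t⁻¹ Y` encodes a skew derivation `D` with `D X = -(t - 1)`, `D Y = -(t⁻¹ - 1)` in its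
upper right entry. -/
def skewMat {F : Type*} [Field F] {R : Type*} [Ring R] [Algebra F R] (t : F) (x : R) :
    Matrix (Fin 2) (Fin 2) R :=
  !![t • x, -((t - 1) • 1); 0, x]

/-- The diagonal entries are multiples of `sSerre t x y`, while the upper right entry vanishes
identically. -/
theorem serre_mat {F : Type*} [Field F] {R : Type*} [Ring R] [Algebra F R] {t : F} (ht : t ≠ 0)
    (x y : R) (h : sSerre t x y = 0) :
    sSerre t (skewMat t x) (skewMat t⁻¹ y) = 0 := by
  have e : ∀ a b c d e f : R, !![a, b; 0, c] * !![d, e; 0, f]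
      = !![a * d, a * e + b * f; 0, c * f] := by
    intros; simp
  have h' := h
  simp only [sSerre, skewMat, e, mul_assoc] at h' ⊢
  ext i j
  fin_cases i <;> fin_cases j
  · simp only [Matrix.add_apply, Matrix.sub_apply, Matrix.smul_apply, Matrix.of_apply,
      Matrix.cons_val', Matrix.cons_val_zero, Matrix.zero_apply,
      Fin.zero_eta, Matrix.cons_val_fin_one, mul_smul_comm, smul_mul_assoc]
    rw [← smul_zero (t ^ 2), ← h']
    match_scalars <;> field_simp
  · simp only [Matrix.add_apply, Matrix.sub_apply, Matrix.smul_apply, Matrix.of_apply,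
      Matrix.cons_val', Matrix.cons_val_zero, Matrix.cons_val_one, Matrix.zero_apply,
      Fin.zero_eta, Fin.mk_one, Matrix.cons_val_fin_one, mul_smul_comm, smul_mul_assoc, mul_neg,
      neg_mul, mul_one, one_mul, add_mul, mul_assoc]
    match_scalars <;> field_simp <;> ring
  · simp
  · simpa [mul_assoc] using h'

/-! ### The positive part and its skew derivations -/

/-- The cubic `q`-Serre relations. -/
inductive UpRel (F : Type*) [Field F] (s : F) :
    FreeAlgebra F (Fin 2) → FreeAlgebra F (Fin 2) → Prop
  | xy : UpRel F s (sSerre s (FreeAlgebra.ι F 0) (FreeAlgebra.ι F 1)) 0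
  | yx : UpRel F s (sSerre s (FreeAlgebra.ι F 1) (FreeAlgebra.ι F 0)) 0

/-- The positive part `U⁺` of `U_q(ŝl₂)`, with `s = q²`: generators `X`, `Y` subject to the cubic
`q`-Serre relations. It is a `def` with its own ring and algebra instances, rather than an
abbreviation, because instance unification on `RingQuot` is fragile. -/
def Up (F : Type*) [Field F] (s : F) := RingQuot (UpRel F s)

instance (F : Type*) [Field F] (s : F) : Ring (Up F s) := inferInstanceAs (Ring (RingQuot _))
instance (F : Type*) [Field F] (s : F) : Algebra F (Up F s) :=
  inferInstanceAs (Algebra F (RingQuot _))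

namespace Up
variable {F : Type*} [Field F] (s : F)

/-- The quotient map from the free algebra. -/
def mk : FreeAlgebra F (Fin 2) →ₐ[F] Up F s := RingQuot.mkAlgHom F (UpRel F s)

theorem mk_surjective : Function.Surjective (mk s) := RingQuot.mkAlgHom_surjective F (UpRel F s)

/-- The first generator of `U⁺`. -/
def X : Up F s := mk s (FreeAlgebra.ι F 0)
/-- The second generator of `U⁺`. -/
def Y : Up F s := mk s (FreeAlgebra.ι F 1)

theorem serre_XY : sSerre s (X s) (Y s) = 0 := by
  have : mk s _ = mk s _ := RingQuot.mkAlgHom_rel F (UpRel.xy (F := F) (s := s))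
  rwa [map_sSerre, map_zero] at this

theorem serre_YX : sSerre s (Y s) (X s) = 0 := by
  have : mk s _ = mk s _ := RingQuot.mkAlgHom_rel F (UpRel.yx (F := F) (s := s))
  rwa [map_sSerre, map_zero] at this

section lift
variable {R : Type*} [Ring R] [Algebra F R] (u v : R)

/-- The universal property of `U⁺`. -/
def lift (huv : sSerre s u v = 0) (hvu : sSerre s v u = 0) : Up F s →ₐ[F] R :=
  RingQuot.liftAlgHom F ⟨FreeAlgebra.lift F ![u, v], by
    rintro _ _ (_ | _)
    · simpa [map_sSerre] using huv
    · simpa [map_sSerre] using hvu⟩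

theorem lift_mk (huv : sSerre s u v = 0) (hvu : sSerre s v u = 0) (p : FreeAlgebra F (Fin 2)) :
    lift s u v huv hvu (mk s p) = FreeAlgebra.lift F ![u, v] p :=
  RingQuot.liftAlgHom_mkAlgHom_apply F _ _ _

theorem lift_X (huv : sSerre s u v = 0) (hvu : sSerre s v u = 0) :
    lift s u v huv hvu (X s) = u := by
  rw [X, lift_mk]; simp

theorem lift_Y (huv : sSerre s u v = 0) (hvu : sSerre s v u = 0) :
    lift s u v huv hvu (Y s) = v := by
  rw [Y, lift_mk]; simp
end lift

/-- `U⁺` is spanned by words, built from `1` by left multiplication by `X` and `Y`. -/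
theorem ind {P : Up F s → Prop} (h1 : P 1) (hX : ∀ w, P w → P (X s * w))
    (hY : ∀ w, P w → P (Y s * w)) (hadd : ∀ u w, P u → P w → P (u + w))
    (hsmul : ∀ (c : F) w, P w → P (c • w)) (w : Up F s) : P w := by
  obtain ⟨p, rfl⟩ := mk_surjective s w
  have key : ∀ p : FreeAlgebra F (Fin 2), ∀ w, P w → P (mk s p * w) := by
    intro p
    induction p using FreeAlgebra.induction with
    | grade0 c =>
      intro w hw
      rw [AlgHom.commutes, ← Algebra.smul_def]
      exact hsmul c w hw
    | grade1 i =>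
      intro w hw
      fin_cases i
      · exact hX w hw
      · exact hY w hw
    | mul a b ha hb =>
      intro w hw
      rw [map_mul, mul_assoc]
      exact ha _ (hb _ hw)
    | add a b ha hb =>
      intro w hw
      rw [map_add, add_mul]
      exact hadd _ _ (ha _ hw) (hb _ hw)
  simpa using key p 1 h1

variable {s} {t : F}

theorem serre_skewMat_XY (hs : s ≠ 0) (ht : t = s ∨ t = s⁻¹) :
    sSerre s (skewMat t (X s)) (skewMat t⁻¹ (Y s)) = 0 := by
  rcases ht with rfl | rfl
  · exact serre_mat hs _ _ (serre_XY _)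
  · rw [← sSerre_inv]
    exact serre_mat (inv_ne_zero hs) _ _ (by rw [sSerre_inv]; exact serre_XY _)

theorem serre_skewMat_YX (hs : s ≠ 0) (ht : t = s ∨ t = s⁻¹) :
    sSerre s (skewMat t⁻¹ (Y s)) (skewMat t (X s)) = 0 := by
  rcases ht with rfl | rfl
  · have := serre_mat (inv_ne_zero hs) (Y t) (X t) (by rw [sSerre_inv]; exact serre_YX _)
    rwa [sSerre_inv, inv_inv] at this
  · have := serre_mat hs (Y s) (X s) (serre_YX _)
    rwa [inv_inv]

/-- The algebra homomorphism whose upper right entry is the skew derivation `D`. -/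
def mHom (hs : s ≠ 0) (ht : t = s ∨ t = s⁻¹) :
    Up F s →ₐ[F] Matrix (Fin 2) (Fin 2) (Up F s) :=
  lift s (skewMat t (X s)) (skewMat t⁻¹ (Y s)) (serre_skewMat_XY hs ht) (serre_skewMat_YX hs ht)

/-- The skew derivation of `U⁺` with `D (X w) = t X (D w) - (t - 1) w` and
`D (Y w) = t⁻¹ Y (D w) - (t⁻¹ - 1) w`. The parameter `t` is `s` for the action of `x₁` and `s⁻¹` for
the action of `x₃`. -/
def D (hs : s ≠ 0) (ht : t = s ∨ t = s⁻¹) : Module.End F (Up F s) where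
  toFun w := mHom hs ht w 0 1
  map_add' u w := by simp
  map_smul' c w := by simp

theorem skewMat_mul_zero_one {R : Type*} [Ring R] [Algebra F R] (t : F) (x : R)
    (M : Matrix (Fin 2) (Fin 2) R) :
    (skewMat t x * M) 0 1 = t • (x * M 0 1) - (t - 1) • M 1 1 := by
  simp [skewMat, Matrix.mul_apply, Fin.sum_univ_two, sub_eq_add_neg]

theorem skewMat_mul_one_one {R : Type*} [Ring R] [Algebra F R] (t : F) (x : R)
    (M : Matrix (Fin 2) (Fin 2) R) :
    (skewMat t x * M) 1 1 = x * M 1 1 := by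
  simp [skewMat, Matrix.mul_apply, Fin.sum_univ_two]

theorem mHom_one_one (hs : s ≠ 0) (ht : t = s ∨ t = s⁻¹) (w : Up F s) :
    mHom hs ht w 1 1 = w := by
  induction w using ind with
  | h1 => simp
  | hX w hw => rw [map_mul, mHom, lift_X, skewMat_mul_one_one]; exact congrArg _ hw
  | hY w hw => rw [map_mul, mHom, lift_Y, skewMat_mul_one_one]; exact congrArg _ hw
  | hadd u w hu hw => rw [map_add, Matrix.add_apply, hu, hw]
  | hsmul c w hw => rw [map_smul, Matrix.smul_apply, hw]

theorem D_one (hs : s ≠ 0) (ht : t = s ∨ t = s⁻¹) : D hs ht 1 = 0 := by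
  simp [D]

theorem D_X (hs : s ≠ 0) (ht : t = s ∨ t = s⁻¹) (w : Up F s) :
    D hs ht (X s * w) = t • (X s * D hs ht w) - (t - 1) • w := by
  change mHom hs ht (X s * w) 0 1 = t • (X s * mHom hs ht w 0 1) - (t - 1) • w
  have := skewMat_mul_zero_one t (X s) (mHom hs ht w)
  rw [mHom_one_one] at this
  rw [← this, map_mul]
  conv_lhs => rw [mHom, lift_X]
  rfl

theorem D_Y (hs : s ≠ 0) (ht : t = s ∨ t = s⁻¹) (w : Up F s) :
    D hs ht (Y s * w) = t⁻¹ • (Y s * D hs ht w) - (t⁻¹ - 1) • w := by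
  change mHom hs ht (Y s * w) 0 1 = t⁻¹ • (Y s * mHom hs ht w 0 1) - (t⁻¹ - 1) • w
  have := skewMat_mul_zero_one t⁻¹ (Y s) (mHom hs ht w)
  rw [mHom_one_one] at this
  rw [← this, map_mul]
  conv_lhs => rw [mHom, lift_Y]
  rfl

/-- Left multiplication by `X`. -/
def LX (s : F) : Module.End F (Up F s) := LinearMap.mulLeft F (X s)
/-- Left multiplication by `Y`. -/
def LY (s : F) : Module.End F (Up F s) := LinearMap.mulLeft F (Y s)

theorem D_LX (hs : s ≠ 0) (ht : t = s ∨ t = s⁻¹) :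
    D hs ht * LX s = t • (LX s * D hs ht) - (t - 1) • 1 :=
  LinearMap.ext fun w => D_X hs ht w

theorem D_LY (hs : s ≠ 0) (ht : t = s ∨ t = s⁻¹) :
    D hs ht * LY s = t⁻¹ • (LY s * D hs ht) - (t⁻¹ - 1) • 1 :=
  LinearMap.ext fun w => D_Y hs ht w

/-- An operator that kills `1` and commutes up to nonzero scalars with left multiplication by the
generators is zero. -/
theorem eq_zero_of_comm {E : Module.End F (Up F s)} {c d : F} (hc : c ≠ 0) (hd : d ≠ 0)
    (h1 : E 1 = 0) (hX : LX s * E = c • (E * LX s)) (hY : LY s * E = d • (E * LY s)) : E = 0 := by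
  ext w
  rw [LinearMap.zero_apply]
  induction w using ind with
  | h1 => exact h1
  | hX w hw =>
    have := LinearMap.congr_fun hX w
    change X s * E w = c • E (X s * w) at this
    rw [hw, mul_zero] at this
    exact (smul_eq_zero.1 this.symm).resolve_left hc
  | hY w hw =>
    have := LinearMap.congr_fun hY w
    change Y s * E w = d • E (Y s * w) at this
    rw [hw, mul_zero] at this
    exact (smul_eq_zero.1 this.symm).resolve_left hd
  | hadd u w hu hw => rw [map_add, hu, hw, add_zero]
  | hsmul c w hw => rw [map_smul, hw, smul_zero]

end Up

theorem flip_rel {F : Type*} [Field F] {R : Type*} [Ring R] [Algebra F R] {t : F} (ht : t ≠ 0)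
    {d x : R} (h : d * x = t • (x * d) - (t - 1) • 1) :
    x * d = t⁻¹ • (d * x) - (t⁻¹ - 1) • 1 := by
  rw [h]
  match_scalars <;> field_simp
  ring

theorem comm_sSerre' {F : Type*} [Field F] {s : F} (hs : s ≠ 0) {R : Type*} [Ring R] [Algebra F R]
    {d x y : R} (hx : d * x = s • (x * d) - (s - 1) • 1)
    (hy : d * y = s⁻¹ • (y * d) - (s⁻¹ - 1) • 1) :
    d * sSerre s x y = s ^ 2 • (sSerre s x y * d) :=
  comm_sSerre hs hx (by rw [hy]; module)

namespace Up
variable {F : Type*} [Field F] {s t : F}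

/-- The skew derivations satisfy the `q`-Serre relations: by `comm_sSerre'`, with left
multiplications in the role of `d`, their Serre expression commutes up to scalars with left
multiplication by `X` and `Y`, and it kills `1`. -/
theorem serre_D (hs : s ≠ 0) (ht : t = s ∨ t = s⁻¹) (ht' : t⁻¹ = s ∨ t⁻¹ = s⁻¹) :
    sSerre s (D hs ht) (D hs ht') = 0 := by
  have ht0 : t ≠ 0 := by rcases ht with rfl | rfl; exacts [hs, inv_ne_zero hs]
  have e : sSerre s (D hs ht) (D hs ht') = sSerre t (D hs ht) (D hs ht') := by
    rcases ht with h | h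
    · congr 1; exact h.symm
    · rw [← sSerre_inv s]; congr 1; exact h.symm
  have e' : sSerre s (D hs ht) (D hs ht') = sSerre t⁻¹ (D hs ht) (D hs ht') := by
    rw [e, sSerre_inv]
  have hX : LX s * sSerre s (D hs ht) (D hs ht')
      = (t⁻¹) ^ 2 • (sSerre s (D hs ht) (D hs ht') * LX s) := by
    rw [e']
    refine comm_sSerre' (inv_ne_zero ht0) (flip_rel ht0 (D_LX hs ht)) ?_
    exact flip_rel (inv_ne_zero ht0) (D_LX hs ht')
  have hY : LY s * sSerre s (D hs ht) (D hs ht')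
      = t ^ 2 • (sSerre s (D hs ht) (D hs ht') * LY s) := by
    rw [e]
    refine comm_sSerre' ht0 ?_ ?_
    · have := flip_rel (inv_ne_zero ht0) (D_LY hs ht)
      rwa [inv_inv] at this
    · have := flip_rel (inv_ne_zero (inv_ne_zero ht0)) (D_LY hs ht')
      rwa [inv_inv] at this
  refine eq_zero_of_comm (pow_ne_zero 2 (inv_ne_zero ht0)) (pow_ne_zero 2 ht0) ?_ hX hY
  simp [sSerre, D_one]

theorem serre_L (s : F) : sSerre s (LX s) (LY s) = 0 := by
  have := map_sSerre s (Algebra.lmul F (Up F s)) (X s) (Y s)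
  rw [serre_XY, map_zero] at this
  exact this.symm

theorem serre_L' (s : F) : sSerre s (LY s) (LX s) = 0 := by
  have := map_sSerre s (Algebra.lmul F (Up F s)) (Y s) (X s)
  rw [serre_YX, map_zero] at this
  exact this.symm
end Up

/-! ### The representation of `□_q` on the positive part -/

theorem weyl_a {F : Type*} [Field F] {R : Type*} [Ring R] [Algebra F R] {q : F} (hq : q ≠ 0)
    (hq2 : q ^ 2 ≠ 1) {d x : R} (h : d * x = (q ^ 2) • (x * d) - (q ^ 2 - 1) • 1) :
    (q - q⁻¹)⁻¹ • (q • (x * d) - q⁻¹ • (d * x)) = 1 := by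
  have h' : q ^ 2 - 1 ≠ 0 := sub_ne_zero.2 hq2
  have h2 : q - q⁻¹ ≠ 0 := by
    intro h0; apply h'
    have : q * (q - q⁻¹) = 0 := by rw [h0, mul_zero]
    rw [← this]; field_simp
  rw [inv_smul_eq_iff₀ h2, h]
  match_scalars <;> field_simp
  ring

theorem weyl_b {F : Type*} [Field F] {R : Type*} [Ring R] [Algebra F R] {q : F} (hq : q ≠ 0)
    (hq2 : q ^ 2 ≠ 1) {d x : R} (h : d * x = (q ^ 2)⁻¹ • (x * d) - ((q ^ 2)⁻¹ - 1) • 1) :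
    (q - q⁻¹)⁻¹ • (q • (d * x) - q⁻¹ • (x * d)) = 1 := by
  apply weyl_a hq hq2
  have := flip_rel (inv_ne_zero (pow_ne_zero 2 hq)) h
  rwa [inv_inv] at this

namespace Up
variable {F : Type*} [Field F] {q : F}

/-- The operators by which `x₀, x₁, x₂, x₃` act on `U⁺`: `x₀` and `x₂` multiply by `X` and `Y`,
`x₁` and `x₃` act by skew derivations. The definition uses that `ZMod 4` unfolds to `Fin 4`. -/
def boxGen (hs : q ^ 2 ≠ 0) : ZMod 4 → Module.End F (Up F (q ^ 2)) :=
  (![LX _, D hs (.inl rfl), LY _, D hs (.inr rfl)] : Fin 4 → _)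

/-- The representation of `□_q` on `U⁺`. -/
def boxRep (hq : q ≠ 0) (hq2 : q ^ 2 ≠ 1) : Box F q →ₐ[F] Module.End F (Up F (q ^ 2)) :=
  RingQuot.liftAlgHom F ⟨FreeAlgebra.lift F (boxGen (pow_ne_zero 2 hq)), by
    have hs := pow_ne_zero 2 hq
    rintro _ _ (i | i)
    · simp only [map_smul, map_sub, map_mul, FreeAlgebra.lift_ι_apply, map_one]
      fin_cases i
      · exact weyl_a hq hq2 (D_LX hs _)
      · exact weyl_b hq hq2 (D_LY hs _)
      · refine weyl_a hq hq2 (d := D hs (.inr rfl)) (x := LY _) ?_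
        have := D_LY (F := F) hs (.inr rfl)
        rwa [inv_inv] at this
      · exact weyl_b hq hq2 (D_LX hs _)
    · rw [qSerre_eq_sSerre hq hq2, map_sSerre, map_zero]
      simp only [FreeAlgebra.lift_ι_apply]
      fin_cases i
      · exact serre_L _
      · exact serre_D hs _ _
      · exact serre_L' _
      · have := serre_D (t := (q ^ 2)⁻¹) hs (.inr rfl) (.inl (inv_inv _))
        simp only [inv_inv] at this
        exact this⟩

theorem boxRep_bx (hq : q ≠ 0) (hq2 : q ^ 2 ≠ 1) (i : ZMod 4) :
    boxRep hq hq2 (bx F q i) = boxGen (pow_ne_zero 2 hq) i := by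
  simp [boxRep, bx]

end Up

/-! ### Filtrations by word length -/

section Filt
variable {F : Type*} [Field F] {R : Type*} [Ring R] [Algebra F R]

/-- The span of `1, u, v`. Its power `low F u v ^ n` consists of the polynomials of degree at most
`n` in `u, v`. -/
def low (F : Type*) [Field F] {R : Type*} [Ring R] [Algebra F R] (u v : R) : Submodule F R :=
  Submodule.span F {1, u, v}

/-- The span of `u, v`. Its power `homog F u v ^ n` consists of the values at `u, v` of homogeneous
noncommutative polynomials of degree `n`. -/
def homog (F : Type*) [Field F] {R : Type*} [Ring R] [Algebra F R] (u v : R) : Submodule F R :=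
  Submodule.span F {u, v}

theorem low_eq (u v : R) : low F u v = 1 ⊔ homog F u v := by
  rw [low, Submodule.span_insert, Submodule.one_eq_span, homog]

theorem low_ind {u v : R} {n : ℕ} {P : R → Prop} (hadd : ∀ x y, P x → P y → P (x + y))
    (hsmul : ∀ (c : F) x, P x → P (c • x)) (h1 : ∀ w ∈ low F u v ^ n, P w)
    (hu : ∀ w ∈ low F u v ^ n, P (u * w)) (hv : ∀ w ∈ low F u v ^ n, P (v * w)) :
    ∀ w ∈ low F u v ^ (n + 1), P w := by
  intro w hw
  rw [pow_succ'] at hw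
  refine Submodule.mul_induction_on hw (fun m hm w hw => ?_) hadd
  obtain ⟨a, b, c, rfl⟩ := Submodule.mem_span_triple.1 hm
  simp only [add_mul, smul_mul_assoc, one_mul]
  exact hadd _ _ (hadd _ _ (hsmul _ _ (h1 w hw)) (hsmul _ _ (hu w hw))) (hsmul _ _ (hv w hw))

theorem homog_ind {u v : R} {n : ℕ} {P : R → Prop} (hadd : ∀ x y, P x → P y → P (x + y))
    (hsmul : ∀ (c : F) x, P x → P (c • x))
    (hu : ∀ w ∈ homog F u v ^ n, P (u * w)) (hv : ∀ w ∈ homog F u v ^ n, P (v * w)) :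
    ∀ w ∈ homog F u v ^ (n + 1), P w := by
  intro w hw
  rw [pow_succ'] at hw
  refine Submodule.mul_induction_on hw (fun m hm w hw => ?_) hadd
  obtain ⟨a, b, rfl⟩ := Submodule.mem_span_pair.1 hm
  simp only [add_mul, smul_mul_assoc]
  exact hadd _ _ (hsmul _ _ (hu w hw)) (hsmul _ _ (hv w hw))

theorem one_mem_low (u v : R) : 1 ∈ low F u v := Submodule.subset_span (by simp)
theorem left_mem_low (u v : R) : u ∈ low F u v := Submodule.subset_span (by simp)
theorem right_mem_low (u v : R) : v ∈ low F u v := Submodule.subset_span (by simp)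

theorem low_mono (u v : R) {m n : ℕ} (h : m ≤ n) : low F u v ^ m ≤ low F u v ^ n := by
  refine pow_le_pow_right' ?_ h
  rw [Submodule.one_eq_span, Submodule.span_singleton_le_iff_mem]
  exact one_mem_low u v

theorem left_mul_mem_low {u v w : R} {n : ℕ} (hw : w ∈ low F u v ^ n) :
    u * w ∈ low F u v ^ (n + 1) := by
  rw [pow_succ']; exact Submodule.mul_mem_mul (left_mem_low u v) hw

theorem right_mul_mem_low {u v w : R} {n : ℕ} (hw : w ∈ low F u v ^ n) :
    v * w ∈ low F u v ^ (n + 1) := by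
  rw [pow_succ']; exact Submodule.mul_mem_mul (right_mem_low u v) hw

/-- A polynomial of degree at most `n + 1` is a homogeneous part plus lower terms. -/
theorem low_succ_le (u v : R) (n : ℕ) :
    low F u v ^ (n + 1) ≤ homog F u v ^ (n + 1) ⊔ low F u v ^ n := by
  induction n with
  | zero => simp [low_eq, sup_comm]
  | succ n ih =>
    rw [pow_succ' (low F u v) (n + 1), low_eq, Submodule.sup_mul, one_mul, ← low_eq]
    refine sup_le le_sup_right ?_
    refine (mul_le_mul_right ih _).trans ?_
    rw [Submodule.mul_sup, ← pow_succ']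
    refine sup_le_sup le_rfl ?_
    rw [pow_succ']
    have hle : homog F u v ≤ low F u v := by rw [low_eq]; exact le_sup_right
    exact mul_le_mul_left hle _

theorem map_homog {R' : Type*} [Ring R'] [Algebra F R'] (φ : R →ₐ[F] R') (u v : R) (n : ℕ) :
    (homog F u v ^ n).map φ.toLinearMap = homog F (φ u) (φ v) ^ n := by
  rw [Submodule.map_pow, homog, Submodule.map_span, homog]
  simp [Set.image_pair]

open Polynomial in
theorem sSerre_monomial (s : F) (u v : R) :
    sSerre s (monomial 1 u : R[X]) (monomial 1 v) = monomial 4 (sSerre s u v) := by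
  simp only [sSerre, monomial_mul_monomial, smul_monomial, map_add, map_sub]
end Filt

namespace Up
open Polynomial
variable {F : Type*} [Field F] (s : F)

/-- The word-length grading of `U⁺`, encoded as the homomorphism `X ↦ X T`, `Y ↦ Y T`. -/
def grad : Up F s →ₐ[F] (Up F s)[X] :=
  lift s (monomial 1 (X s)) (monomial 1 (Y s))
    (by rw [sSerre_monomial, serre_XY, map_zero]) (by rw [sSerre_monomial, serre_YX, map_zero])

theorem grad_low {n : ℕ} : ∀ w ∈ low F (X s) (Y s) ^ n, ∀ i, n < i → (grad s w).coeff i = 0 := by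
  induction n with
  | zero =>
    intro w hw i hi
    rw [pow_zero] at hw
    obtain ⟨c, rfl⟩ := Submodule.mem_one.1 hw
    rw [AlgHom.commutes, Polynomial.algebraMap_apply, coeff_C_of_ne_zero hi.ne']
  | succ n ih =>
    apply low_ind
    · intro x y hx hy i hi
      rw [map_add, coeff_add, hx i hi, hy i hi, add_zero]
    · intro c x hx i hi
      rw [map_smul, coeff_smul, hx i hi, smul_zero]
    · intro w hw i hi
      exact ih w hw i (by omega)
    · intro w hw i hi
      obtain ⟨j, rfl⟩ : ∃ j, i = j + 1 := ⟨i - 1, by omega⟩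
      rw [map_mul, grad, lift_X, coeff_monomial_mul, ← grad, ih w hw j (by omega), mul_zero]
    · intro w hw i hi
      obtain ⟨j, rfl⟩ : ∃ j, i = j + 1 := ⟨i - 1, by omega⟩
      rw [map_mul, grad, lift_Y, coeff_monomial_mul, ← grad, ih w hw j (by omega), mul_zero]

theorem grad_homog {a b : F} {n : ℕ} :
    ∀ w ∈ homog F (a • X s) (b • Y s) ^ n, grad s w = monomial n w := by
  induction n with
  | zero =>
    intro w hw
    rw [pow_zero] at hw
    obtain ⟨c, rfl⟩ := Submodule.mem_one.1 hw
    rw [AlgHom.commutes, Polynomial.algebraMap_apply, monomial_zero_left]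
  | succ n ih =>
    apply homog_ind
    · intro x y hx hy
      rw [map_add, hx, hy, map_add]
    · intro c x hx
      rw [map_smul, hx, smul_monomial]
    · intro w hw
      rw [map_mul, ih w hw, map_smul, grad, lift_X, smul_monomial, monomial_mul_monomial, add_comm]
    · intro w hw
      rw [map_mul, ih w hw, map_smul, grad, lift_Y, smul_monomial, monomial_mul_monomial, add_comm]

/-- In the graded algebra `U⁺`, a homogeneous element of degree `n + 1` that is also a polynomial of
degree at most `n` vanishes. -/
theorem eq_zero_of_homog_of_low {a b : F} {n : ℕ} {w : Up F s}
    (h : w ∈ homog F (a • X s) (b • Y s) ^ (n + 1)) (h' : w ∈ low F (X s) (Y s) ^ n) : w = 0 := by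
  have := grad_low s w h' (n + 1) (Nat.lt_succ_self n)
  rwa [grad_homog s w h, coeff_monomial_same] at this

/-- The augmentation of `U⁺`, which shows that `1 ≠ 0` there. -/
def aug : Up F s →ₐ[F] F := lift s 0 0 (by simp [sSerre]) (by simp [sSerre])

variable {s} {t : F}
/-- Skew derivations do not raise the filtration degree. -/
theorem D_low (hs : s ≠ 0) (ht : t = s ∨ t = s⁻¹) {n : ℕ} :
    ∀ w ∈ low F (X s) (Y s) ^ n, D hs ht w ∈ low F (X s) (Y s) ^ n := by
  induction n with
  | zero =>
    intro w hw
    rw [pow_zero] at hw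
    obtain ⟨c, rfl⟩ := Submodule.mem_one.1 hw
    rw [Algebra.algebraMap_eq_smul_one, map_smul, D_one, smul_zero]
    exact zero_mem _
  | succ n ih =>
    apply low_ind
    · intro x y hx hy
      rw [map_add]; exact add_mem hx hy
    · intro c x hx
      rw [map_smul]; exact Submodule.smul_mem _ _ hx
    · intro w hw
      exact low_mono _ _ n.le_succ (ih w hw)
    · intro w hw
      rw [D_X]
      exact sub_mem (Submodule.smul_mem _ _ (left_mul_mem_low (ih w hw)))
        (Submodule.smul_mem _ _ (low_mono _ _ n.le_succ hw))
    · intro w hw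
      rw [D_Y]
      exact sub_mem (Submodule.smul_mem _ _ (right_mul_mem_low (ih w hw)))
        (Submodule.smul_mem _ _ (low_mono _ _ n.le_succ hw))
end Up

/-! ### The Rees algebra of `O_q` -/

section Rees
open Polynomial
variable {F : Type*} [Field F] {R : Type*} [Ring R] [Algebra F R]

variable (F) in
/-- The Rees algebra of the filtration `low F u v ^ n`, inside `R[T]`: it is generated by `T`, `u T`
and `v T`. -/
def rees (u v : R) : Subalgebra F R[X] :=
  Algebra.adjoin F {monomial 1 1, monomial 1 u, monomial 1 v}

/-- The coefficient of `T ^ i` of an element of the Rees algebra has degree at most `i`. -/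
theorem coeff_rees {u v : R} {p : R[X]} (hp : p ∈ rees F u v) :
    ∀ i, p.coeff i ∈ low F u v ^ i := by
  induction hp using Algebra.adjoin_induction with
  | mem p hp =>
    have h : ∃ w ∈ low F u v, p = monomial 1 w := by
      rcases hp with rfl | rfl | rfl
      exacts [⟨_, one_mem_low u v, rfl⟩, ⟨_, left_mem_low u v, rfl⟩, ⟨_, right_mem_low u v, rfl⟩]
    obtain ⟨w, hw, rfl⟩ := h
    intro i
    rw [coeff_monomial]
    split_ifs with h
    · subst h; rwa [pow_one]
    · exact zero_mem _
  | algebraMap c =>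
    intro i
    rw [Polynomial.algebraMap_apply, coeff_C]
    split_ifs with h
    · subst h; rw [pow_zero]; exact Submodule.mem_one.2 ⟨c, rfl⟩
    · exact zero_mem _
  | add p r _ _ hp hr =>
    intro i
    rw [coeff_add]
    exact add_mem (hp i) (hr i)
  | mul p r _ _ hp hr =>
    intro i
    rw [coeff_mul]
    refine Submodule.sum_mem _ fun x hx => ?_
    rw [← Finset.HasAntidiagonal.mem_antidiagonal.1 hx, pow_add]
    exact Submodule.mul_mem_mul (hp _) (hr _)

/-- The central element `T` of the Rees algebra. -/
def reesT (u v : R) : rees F u v := ⟨monomial 1 1, Algebra.subset_adjoin (by simp)⟩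
/-- The element `u T` of the Rees algebra. -/
def reesU (u v : R) : rees F u v := ⟨monomial 1 u, Algebra.subset_adjoin (by simp)⟩
/-- The element `v T` of the Rees algebra. -/
def reesV (u v : R) : rees F u v := ⟨monomial 1 v, Algebra.subset_adjoin (by simp)⟩

theorem reesT_comm (u v : R) (p : rees F u v) : reesT u v * p = p * reesT u v := by
  apply Subtype.ext
  change (monomial 1 1 : R[X]) * p.1 = p.1 * monomial 1 1
  rw [monomial_one_one_eq_X]
  exact X_mul

instance reesTwoSided (u v : R) : (Ideal.span {(reesT u v : rees F u v)}).IsTwoSided where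
  mul_mem_of_left {x} y hx := by
    obtain ⟨c, rfl⟩ := Ideal.mem_span_singleton'.1 hx
    exact Ideal.mem_span_singleton'.2 ⟨c * y, by rw [mul_assoc, mul_assoc, reesT_comm]⟩

/-- The associated graded algebra, as the Rees algebra modulo `T`. -/
abbrev Gr (F : Type*) [Field F] {R : Type*} [Ring R] [Algebra F R] (u v : R) :=
  rees F u v ⧸ Ideal.span {(reesT u v : rees F u v)}

/-- The Dolan/Grady relation `S(u, v) = κ (v u - u v)` homogenizes to
`S(u T, v T) = T² κ (v T · u T - u T · v T)`, so the Serre relation holds modulo `T`. -/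
theorem sSerre_gr {s κ : F} {u v : R} (h : sSerre s u v = κ • (v * u - u * v)) :
    sSerre s (reesU u v : rees F u v) (reesV u v)
      ∈ Ideal.span {(reesT u v : rees F u v)} := by
  refine Ideal.mem_span_singleton'.2
    ⟨reesT u v * (κ • (reesV u v * reesU u v - reesU u v * reesV u v)), ?_⟩
  rw [← reesT_comm]
  apply Subtype.ext
  rw [← Subalgebra.val_apply, ← Subalgebra.val_apply, map_sSerre]
  change (monomial 1 1 : R[X]) * (monomial 1 1 * (κ • (monomial 1 v * monomial 1 u -
    monomial 1 u * monomial 1 v))) = sSerre s (monomial 1 u : R[X]) (monomial 1 v)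
  rw [sSerre_monomial, h]
  simp only [monomial_mul_monomial, smul_monomial, ← map_sub, one_mul]

theorem sSerre_gr' {s κ : F} {u v : R} (h : sSerre s v u = κ • (u * v - v * u)) :
    sSerre s (reesV u v : rees F u v) (reesU u v)
      ∈ Ideal.span {(reesT u v : rees F u v)} := by
  refine Ideal.mem_span_singleton'.2
    ⟨reesT u v * (κ • (reesU u v * reesV u v - reesV u v * reesU u v)), ?_⟩
  rw [← reesT_comm]
  apply Subtype.ext
  rw [← Subalgebra.val_apply, ← Subalgebra.val_apply, map_sSerre]
  change (monomial 1 1 : R[X]) * (monomial 1 1 * (κ • (monomial 1 u * monomial 1 v -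
    monomial 1 v * monomial 1 u))) = sSerre s (monomial 1 v : R[X]) (monomial 1 u)
  rw [sSerre_monomial, h]
  simp only [monomial_mul_monomial, smul_monomial, ← map_sub, one_mul]

theorem sSerre_smul (s : F) (u v : R) (a b : F) (h : sSerre s u v = 0) :
    sSerre s (a • u) (b • v) = 0 := by
  rw [← smul_zero (a ^ 3 * b), ← h]
  simp only [sSerre, smul_mul_assoc, mul_smul_comm, mul_assoc]
  match_scalars <;> ring

theorem rees_coe_homog {u v : R} {n : ℕ} :
    ∀ p ∈ homog F (FreeAlgebra.ι F (0 : Fin 2)) (FreeAlgebra.ι F 1) ^ n,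
      ((FreeAlgebra.lift F ![reesU u v, reesV u v] p : rees F u v) : R[X])
        = monomial n (FreeAlgebra.lift F ![u, v] p) := by
  induction n with
  | zero =>
    intro w hw
    rw [pow_zero] at hw
    obtain ⟨c, rfl⟩ := Submodule.mem_one.1 hw
    rw [AlgHom.commutes, AlgHom.commutes, monomial_zero_left]
    rfl
  | succ n ih =>
    apply homog_ind
    · intro x y hx hy
      rw [map_add, map_add, map_add, ← hx, ← hy]; rfl
    · intro c x hx
      rw [map_smul, map_smul, ← smul_monomial, ← hx]; rfl
    · intro w hw
      rw [map_mul, map_mul, MulMemClass.coe_mul, ih w hw]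
      simp [reesU, monomial_mul_monomial, add_comm]
    · intro w hw
      rw [map_mul, map_mul, MulMemClass.coe_mul, ih w hw]
      simp [reesV, monomial_mul_monomial, add_comm]

/-- If a homogeneous polynomial `p` of degree `n + 1` vanishes at the rescaled generators of `U⁺`,
then `p(u, v)` has degree at most `n`. Indeed `U⁺` maps to the associated graded algebra, so
`p(u T, v T) = p(u, v) T ^ (n + 1)` is a multiple of `T` in the Rees algebra. -/
theorem low_of_ev_eq_zero {s κ : F} {u v : R} (h : sSerre s u v = κ • (v * u - u * v))
    (h' : sSerre s v u = κ • (u * v - v * u)) {a b : F} (ha : a ≠ 0) (hb : b ≠ 0) {n : ℕ}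
    {p : FreeAlgebra F (Fin 2)}
    (hp : p ∈ homog F (FreeAlgebra.ι F (0 : Fin 2)) (FreeAlgebra.ι F 1) ^ (n + 1))
    (hp0 : FreeAlgebra.lift F ![a • Up.X s, b • Up.Y s] p = 0) :
    FreeAlgebra.lift F ![u, v] p ∈ low F u v ^ n := by
  let mk : rees F u v →ₐ[F] Gr F u v := Ideal.Quotient.mkₐ F _
  have e1 : sSerre s (mk (reesU u v)) (mk (reesV u v)) = 0 := by
    rw [← map_sSerre]; exact Ideal.Quotient.eq_zero_iff_mem.2 (sSerre_gr h)
  have e2 : sSerre s (mk (reesV u v)) (mk (reesU u v)) = 0 := by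
    rw [← map_sSerre]; exact Ideal.Quotient.eq_zero_iff_mem.2 (sSerre_gr' h')
  let g : Up F s →ₐ[F] Gr F u v := Up.lift s (a⁻¹ • mk (reesU u v)) (b⁻¹ • mk (reesV u v))
    (sSerre_smul s _ _ _ _ e1) (sSerre_smul s _ _ _ _ e2)
  have hg : g.comp (FreeAlgebra.lift F ![a • Up.X s, b • Up.Y s])
      = mk.comp (FreeAlgebra.lift F ![reesU u v, reesV u v]) := by
    apply FreeAlgebra.hom_ext
    funext i
    fin_cases i
    · simp [g, Up.lift_X, smul_smul, ha]
    · simp [g, Up.lift_Y, smul_smul, hb]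
  have hz : mk (FreeAlgebra.lift F ![reesU u v, reesV u v] p) = 0 := by
    have := AlgHom.congr_fun hg p
    rw [AlgHom.comp_apply, hp0, map_zero] at this
    exact this.symm
  obtain ⟨r, hr⟩ := Ideal.mem_span_singleton'.1 (Ideal.Quotient.eq_zero_iff_mem.1 hz)
  have hr' := congrArg (fun x : rees F u v => (x : R[X]).coeff (n + 1)) hr
  simp only [rees_coe_homog p hp, coeff_monomial_same] at hr'
  rw [← hr']
  have : ((r * reesT u v : rees F u v) : R[X]) = r.1 * Polynomial.X := by
    rw [← monomial_one_one_eq_X]; rfl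
  rw [this, coeff_mul_X]
  exact coeff_rees r.2 n
end Rees

/-! ### Leading terms and faithfulness -/

namespace Up
variable {F : Type*} [Field F] {q : F}

/-- Elements of `U⁺` of degree less than `n`. -/
def lowPred (s : F) : ℕ → Submodule F (Up F s)
  | 0 => ⊥
  | n + 1 => low F (X s) (Y s) ^ n

theorem X_mul_lowPred {s : F} {n : ℕ} {w : Up F s} (h : w ∈ lowPred s n) :
    X s * w ∈ lowPred s (n + 1) := by
  cases n with
  | zero => rw [(Submodule.mem_bot F).1 h, mul_zero]; exact zero_mem _
  | succ n => exact left_mul_mem_low h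

theorem Y_mul_lowPred {s : F} {n : ℕ} {w : Up F s} (h : w ∈ lowPred s n) :
    Y s * w ∈ lowPred s (n + 1) := by
  cases n with
  | zero => rw [(Submodule.mem_bot F).1 h, mul_zero]; exact zero_mem _
  | succ n => exact right_mul_mem_low h

section act
variable {R : Type*} [Ring R] [Algebra F R] {s a b : F} {u v : R} {d e : Module.End F (Up F s)}
  (Θ : R →ₐ[F] Module.End F (Up F s))
  (hu : Θ u = a • LX s + a⁻¹ • d) (hv : Θ v = b • LY s + b⁻¹ • e)
  (hd : ∀ n, ∀ w ∈ low F (X s) (Y s) ^ n, d w ∈ low F (X s) (Y s) ^ n)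
  (he : ∀ n, ∀ w ∈ low F (X s) (Y s) ^ n, e w ∈ low F (X s) (Y s) ^ n)
include hu hv hd he

theorem act_low {n : ℕ} : ∀ w ∈ low F u v ^ n, Θ w 1 ∈ low F (X s) (Y s) ^ n := by
  induction n with
  | zero =>
    intro w hw
    rw [pow_zero] at hw
    obtain ⟨c, rfl⟩ := Submodule.mem_one.1 hw
    rw [AlgHom.commutes, pow_zero]
    exact Submodule.mem_one.2 ⟨c, by rw [Module.algebraMap_end_apply, Algebra.smul_def, mul_one]⟩
  | succ n ih =>
    apply low_ind
    · intro x y hx hy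
      rw [map_add]; exact add_mem hx hy
    · intro c x hx
      rw [map_smul]; exact Submodule.smul_mem _ _ hx
    · intro w hw
      exact low_mono _ _ n.le_succ (ih w hw)
    · intro w hw
      rw [map_mul, hu]
      exact add_mem (Submodule.smul_mem _ _ (left_mul_mem_low (ih w hw)))
        (Submodule.smul_mem _ _ (low_mono _ _ n.le_succ (hd n _ (ih w hw))))
    · intro w hw
      rw [map_mul, hv]
      exact add_mem (Submodule.smul_mem _ _ (right_mul_mem_low (ih w hw)))
        (Submodule.smul_mem _ _ (low_mono _ _ n.le_succ (he n _ (ih w hw))))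

/-- When `u` acts as `a X + a⁻¹ d` and `v` as `b Y + b⁻¹ e`, with `d, e` not raising degrees, the
leading term of `p(u, v) · 1` is `p(a X, b Y)`. Here the bound `d w ∈ low ^ n` for `w ∈ low ^ n`
already suffices: `p(u, v) · 1` has degree at most `n`, one less than the leading term of the next
step. -/
theorem act_homog {n : ℕ} :
    ∀ p ∈ homog F (FreeAlgebra.ι F (0 : Fin 2)) (FreeAlgebra.ι F 1) ^ n,
      FreeAlgebra.lift F ![u, v] p ∈ low F u v ^ n ∧
      Θ (FreeAlgebra.lift F ![u, v] p) 1 - FreeAlgebra.lift F ![a • X s, b • Y s] p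
        ∈ lowPred s n := by
  induction n with
  | zero =>
    intro w hw
    rw [pow_zero] at hw
    obtain ⟨c, rfl⟩ := Submodule.mem_one.1 hw
    refine ⟨by rw [AlgHom.commutes, pow_zero]; exact Submodule.mem_one.2 ⟨c, rfl⟩, ?_⟩
    rw [AlgHom.commutes, AlgHom.commutes, AlgHom.commutes, Module.algebraMap_end_apply,
      Algebra.smul_def, mul_one, sub_self]
    exact zero_mem _
  | succ n ih =>
    apply homog_ind
    · intro x y hx hy
      simp only [map_add]
      refine ⟨add_mem hx.1 hy.1, ?_⟩
      rw [LinearMap.add_apply, add_sub_add_comm]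
      exact add_mem hx.2 hy.2
    · intro c x hx
      simp only [map_smul]
      refine ⟨Submodule.smul_mem _ _ hx.1, ?_⟩
      rw [LinearMap.smul_apply, ← smul_sub]
      exact Submodule.smul_mem _ _ hx.2
    · intro w hw
      obtain ⟨h1, h2⟩ := ih w hw
      simp only [map_mul, FreeAlgebra.lift_ι_apply, Matrix.cons_val_zero]
      refine ⟨left_mul_mem_low h1, ?_⟩
      set z := Θ (FreeAlgebra.lift F ![u, v] w)
      have e : (Θ u * z) 1 - (a • X s) * FreeAlgebra.lift F ![a • X s, b • Y s] w
          = a • (X s * (z 1 - FreeAlgebra.lift F ![a • X s, b • Y s] w)) + a⁻¹ • d (z 1) := by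
        have e0 : (Θ u * z) 1 = a • (LX s (z 1)) + a⁻¹ • d (z 1) := by rw [hu]; rfl
        rw [e0, LX, LinearMap.mulLeft_apply, mul_sub, smul_sub, sub_add_eq_add_sub,
          smul_mul_assoc]
      rw [e]
      exact add_mem (Submodule.smul_mem _ _ (X_mul_lowPred h2))
        (Submodule.smul_mem _ _ (hd n _ (act_low Θ hu hv hd he _ h1)))
    · intro w hw
      obtain ⟨h1, h2⟩ := ih w hw
      simp only [map_mul, FreeAlgebra.lift_ι_apply, Matrix.cons_val_one, Matrix.cons_val_fin_one]
      refine ⟨right_mul_mem_low h1, ?_⟩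
      set z := Θ (FreeAlgebra.lift F ![u, v] w)
      have e : (Θ v * z) 1 - (b • Y s) * FreeAlgebra.lift F ![a • X s, b • Y s] w
          = b • (Y s * (z 1 - FreeAlgebra.lift F ![a • X s, b • Y s] w)) + b⁻¹ • e (z 1) := by
        have e0 : (Θ v * z) 1 = b • (LY s (z 1)) + b⁻¹ • e (z 1) := by rw [hv]; rfl
        rw [e0, LY, LinearMap.mulLeft_apply, mul_sub, smul_sub, sub_add_eq_add_sub,
          smul_mul_assoc]
      rw [e]
      exact add_mem (Submodule.smul_mem _ _ (Y_mul_lowPred h2))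
        (Submodule.smul_mem _ _ (he n _ (act_low Θ hu hv hd he _ h1)))

/-- If `w · 1 = 0` and `w = p(u, v) + z` with `p` homogeneous of degree `n + 1` and `z` of lower
degree, then `p(a X, b Y)` has degree at most `n`, hence is zero, hence `w` itself has degree at
most `n`, and induction applies. -/
theorem act_faithful {κ : F} (h : sSerre s u v = κ • (v * u - u * v))
    (h' : sSerre s v u = κ • (u * v - v * u)) (ha : a ≠ 0) (hb : b ≠ 0) {n : ℕ} :
    ∀ w ∈ low F u v ^ n, Θ w 1 = 0 → w = 0 := by
  induction n with
  | zero =>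
    intro w hw hz
    rw [pow_zero] at hw
    obtain ⟨c, rfl⟩ := Submodule.mem_one.1 hw
    rw [AlgHom.commutes, Module.algebraMap_end_apply] at hz
    have := congrArg (aug s) hz
    rw [map_smul, map_one, map_zero, smul_eq_mul, mul_one] at this
    rw [this, map_zero]
  | succ n ih =>
    intro w hw hz
    refine ih w ?_ hz
    obtain ⟨y, hy, z, hzl, rfl⟩ := Submodule.mem_sup.1 (low_succ_le u v n hw)
    have hmap := map_homog (FreeAlgebra.lift F ![u, v])
      (FreeAlgebra.ι F (0 : Fin 2)) (FreeAlgebra.ι F 1) (n + 1)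
    simp only [FreeAlgebra.lift_ι_apply, Matrix.cons_val_zero, Matrix.cons_val_one,
      Matrix.cons_val_fin_one] at hmap
    rw [← hmap] at hy
    obtain ⟨p, hp, rfl⟩ := hy
    refine add_mem (low_of_ev_eq_zero h h' ha hb hp ?_) hzl
    have hmap' := map_homog (FreeAlgebra.lift F ![a • X s, b • Y s])
      (FreeAlgebra.ι F (0 : Fin 2)) (FreeAlgebra.ι F 1) (n + 1)
    simp only [FreeAlgebra.lift_ι_apply, Matrix.cons_val_zero, Matrix.cons_val_one,
      Matrix.cons_val_fin_one] at hmap'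
    refine eq_zero_of_homog_of_low s (a := a) (b := b) (n := n) ?_ ?_
    · rw [← hmap']; exact ⟨p, hp, rfl⟩
    · have h1 := (act_homog Θ hu hv hd he p hp).2
      have h2 := act_low Θ hu hv hd he z hzl
      rw [map_add, LinearMap.add_apply] at hz
      rw [AlgHom.toLinearMap_apply] at hz
      rw [eq_neg_of_add_eq_zero_left hz] at h1
      have := neg_mem (add_mem h1 h2)
      rwa [show ∀ x y : Up F s, -(-x - y + x) = y by intros; abel] at this
end act
end Up

/-! ### The homomorphism from the `q`-Onsager algebra -/

theorem Onsager.mem_low {F : Type*} [Field F] {q : F} (w : Onsager F q) :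
    ∃ n, w ∈ low F (Ag F q) (Bg F q) ^ n := by
  obtain ⟨p, rfl⟩ := RingQuot.mkAlgHom_surjective F (OnsagerRel F q) w
  induction p using FreeAlgebra.induction with
  | grade0 c =>
    exact ⟨0, by rw [AlgHom.commutes, pow_zero]; exact Submodule.mem_one.2 ⟨c, rfl⟩⟩
  | grade1 i =>
    refine ⟨1, ?_⟩
    rw [pow_one]
    fin_cases i
    · exact left_mem_low _ _
    · exact right_mem_low _ _
  | mul x y hx hy =>
    obtain ⟨m, hm⟩ := hx
    obtain ⟨n, hn⟩ := hy
    exact ⟨m + n, by rw [map_mul, pow_add]; exact Submodule.mul_mem_mul hm hn⟩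
  | add x y hx hy =>
    obtain ⟨m, hm⟩ := hx
    obtain ⟨n, hn⟩ := hy
    refine ⟨max m n, ?_⟩
    rw [map_add]
    exact add_mem (low_mono _ _ (le_max_left m n) hm) (low_mono _ _ (le_max_right m n) hn)

/-- Theorem 10.29: the homomorphism `♯ : O_q → □_q` sending `A ↦ a x₀ + a⁻¹ x₁` and
`B ↦ b x₂ + b⁻¹ x₃` is injective. -/
theorem stmt5 (F : Type*) [Field F] (q : F) (hq : q ≠ 0) (hq2 : q ^ 2 ≠ 1)
    (a b : F) (ha : a ≠ 0) (hb : b ≠ 0)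
    (f : Onsager F q →ₐ[F] Box F q)
    (hfA : f (Ag F q) = a • bx F q 0 + a⁻¹ • bx F q 1)
    (hfB : f (Bg F q) = b • bx F q 2 + b⁻¹ • bx F q 3) :
    Function.Injective f := by
  have hs := pow_ne_zero 2 hq
  refine (injective_iff_map_eq_zero f).2 fun w hw => ?_
  obtain ⟨n, hn⟩ := Onsager.mem_low w
  have r1 := RingQuot.mkAlgHom_rel F (OnsagerRel.DG1 (F := F) (q := q))
  have r2 := RingQuot.mkAlgHom_rel F (OnsagerRel.DG2 (F := F) (q := q))
  rw [qSerre_eq_sSerre hq hq2, map_sSerre, map_smul, map_sub, map_mul, map_mul] at r1 r2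
  refine Up.act_faithful (s := q ^ 2) (u := Ag F q) (v := Bg F q) (a := a) (b := b)
    ((Up.boxRep hq hq2).comp f) (d := Up.D hs (.inl rfl)) (e := Up.D hs (.inr rfl)) ?_ ?_
    (fun n => Up.D_low hs _) (fun n => Up.D_low hs _) r1 r2 ha hb w hn ?_
  · rw [AlgHom.comp_apply, hfA, map_add, map_smul, map_smul, Up.boxRep_bx, Up.boxRep_bx]; rfl
  · rw [AlgHom.comp_apply, hfB, map_add, map_smul, map_smul, Up.boxRep_bx, Up.boxRep_bx]; rfl
  · rw [AlgHom.comp_apply, hw, map_zero, LinearMap.zero_apply]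
end
end

section
/- Let □̃_q^even (resp. □̃_q^odd) denote the subalgebra of □̃_q generated by x₀, x₂ (resp. x₁, x₃), and let T denote the free F-algebra on two generators x, y. Then (i) there exists an F-algebra isomorphism T → □̃_q^even sending x ↦ x₀ and y ↦ x₂, and (ii) there exists an F-algebra isomorphism T → □̃_q^odd sending x ↦ x₁ and y ↦ x₃. -/
noncomputable section

/-- Generator indices for `□̃_q`: `Sum.inl i` is `x_i`, `Sum.inr (Sum.inl i)` is `c_i`,
and `Sum.inr (Sum.inr i)` is `c_i⁻¹`. -/
abbrev BTGen := (ZMod 4) ⊕ ((ZMod 4) ⊕ (ZMod 4))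

/-- The free generator corresponding to `x_i`. -/
def btx (F : Type*) [Field F] (i : ZMod 4) : FreeAlgebra F BTGen :=
  FreeAlgebra.ι F (Sum.inl i)

/-- The free generator corresponding to `c_i`. -/
def btc (F : Type*) [Field F] (i : ZMod 4) : FreeAlgebra F BTGen :=
  FreeAlgebra.ι F (Sum.inr (Sum.inl i))

/-- The free generator corresponding to `c_i⁻¹`. -/
def btcinv (F : Type*) [Field F] (i : ZMod 4) : FreeAlgebra F BTGen :=
  FreeAlgebra.ι F (Sum.inr (Sum.inr i))

/-- The defining relations of the algebra `□̃_q`. -/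
inductive BoxTRel (F : Type*) [Field F] (q : F) :
    FreeAlgebra F BTGen → FreeAlgebra F BTGen → Prop
  | c_cinv (i : ZMod 4) : BoxTRel F q (btc F i * btcinv F i) 1
  | cinv_c (i : ZMod 4) : BoxTRel F q (btcinv F i * btc F i) 1
  | central_c (i : ZMod 4) (a : FreeAlgebra F BTGen) : BoxTRel F q (btc F i * a) (a * btc F i)
  | central_cinv (i : ZMod 4) (a : FreeAlgebra F BTGen) :
      BoxTRel F q (btcinv F i * a) (a * btcinv F i)
  | weyl (i : ZMod 4) : BoxTRel F q
      ((q - q⁻¹)⁻¹ • (q • (btx F i * btx F (i + 1)) - q⁻¹ • (btx F (i + 1) * btx F i)))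
      (btc F i)

/-- The algebra `□̃_q`. -/
abbrev BoxT (F : Type*) [Field F] (q : F) := RingQuot (BoxTRel F q)

/-- The generators `x_i` of `□̃_q`. -/
def xT (F : Type*) [Field F] (q : F) (i : ZMod 4) : BoxT F q :=
  RingQuot.mkAlgHom F (BoxTRel F q) (btx F i)

/-- The central generators `c_i` of `□̃_q`. -/
def cT (F : Type*) [Field F] (q : F) (i : ZMod 4) : BoxT F q :=
  RingQuot.mkAlgHom F (BoxTRel F q) (btc F i)

/-- The central generators `c_i⁻¹` of `□̃_q`. -/
def cinvT (F : Type*) [Field F] (q : F) (i : ZMod 4) : BoxT F q :=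
  RingQuot.mkAlgHom F (BoxTRel F q) (btcinv F i)

/-!
Put `T = F⟨x, y⟩`. Mapping `x, y` to `x_k, x_{k+2}` gives `T → □̃_q` with image the subalgebra
generated by `x_k, x_{k+2}`, so only injectivity is at stake. For this, `T` itself is made into a
`□̃_q`-module on which `x_k` and `x_{k+2}` act as left multiplication by `x` and `y`, and every
`c_i` acts as the identity. No relation involves `x_k` and `x_{k+2}` together, so the relations only
prescribe how `x_{k+1}` and `x_{k+3}` move past a leading letter of a word:
* `x_{k+1} (x w) = q² x (x_{k+1} w) - (q² - 1) w`,
  `x_{k+1} (y w) = q⁻² y (x_{k+1} w) + (1 - q⁻²) w`,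
* and the same for `x_{k+3}` with `x` and `y` interchanged.
Since `T` is free, such operators exist (`exists_skew`): they are skew derivations, read off from an
algebra homomorphism into upper triangular `2 × 2` matrices. The composite `T → □̃_q → End T` is the
left regular representation, which is faithful.
-/

/-- On the free algebra there is a linear map with a prescribed skew Leibniz rule for left
multiplication by each generator: the upper right entry of the homomorphism sending the generator
`x_j` to the matrix with rows `(a j • x_j, r j)` and `(0, x_j)`. -/
lemma exists_skew (F : Type*) [Field F] {J : Type*} (a r : J → F) :
    ∃ D : FreeAlgebra F J →ₗ[F] FreeAlgebra F J, ∀ (j : J) (w : FreeAlgebra F J),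
      D (FreeAlgebra.ι F j * w) = a j • (FreeAlgebra.ι F j * D w) + r j • w := by
  let φ : FreeAlgebra F J →ₐ[F] Matrix (Fin 2) (Fin 2) (FreeAlgebra F J) :=
    FreeAlgebra.lift F fun j =>
      !![a j • FreeAlgebra.ι F j, algebraMap F _ (r j); 0, FreeAlgebra.ι F j]
  have hφ : ∀ w, φ w 1 0 = 0 ∧ φ w 1 1 = w := by
    intro w
    induction w with
    | grade0 c => simp [Matrix.algebraMap_matrix_apply]
    | grade1 j => simp [φ]
    | mul u v hu hv =>
      simp [Matrix.mul_apply, Fin.sum_univ_two, hu.1, hu.2, hv.1, hv.2]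
    | add u v hu hv => simp [hu.1, hu.2, hv.1, hv.2]
  refine ⟨{ toFun := fun w => φ w 0 1
            map_add' := fun u v => by simp
            map_smul' := fun c u => by simp }, fun j w => ?_⟩
  have hj : φ (FreeAlgebra.ι F j) =
      !![a j • FreeAlgebra.ι F j, algebraMap F _ (r j); 0, FreeAlgebra.ι F j] := by
    simp [φ]
  simp [Matrix.mul_apply, Fin.sum_univ_two, hj, (hφ w).2, Algebra.smul_def, mul_assoc]

/-- Any four elements of an algebra satisfying the cyclic `q`-Weyl relations with all `c_i = 1`
are the images of the `x_i` under an algebra homomorphism from `□̃_q`. -/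
lemma exists_boxT_hom {F : Type*} [Field F] (q : F) {A : Type*} [Ring A] [Algebra F A]
    (X : ZMod 4 → A)
    (hX : ∀ i, (q - q⁻¹)⁻¹ • (q • (X i * X (i + 1)) - q⁻¹ • (X (i + 1) * X i)) = 1) :
    ∃ Ψ : BoxT F q →ₐ[F] A, ∀ i, Ψ (xT F q i) = X i := by
  let ψ : FreeAlgebra F BTGen →ₐ[F] A :=
    FreeAlgebra.lift F (Sum.elim X fun _ => 1)
  have hx : ∀ i, ψ (btx F i) = X i := fun i => by simp [ψ, btx]
  have hc : ∀ i, ψ (btc F i) = 1 := fun i => by simp [ψ, btc]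
  have hd : ∀ i, ψ (btcinv F i) = 1 := fun i => by simp [ψ, btcinv]
  have hrel : ∀ ⦃u v⦄, BoxTRel F q u v → ψ u = ψ v := by
    intro u v h
    cases h with
    | weyl i =>
      rw [hc, ← hX i]
      simp only [map_smul, map_sub, map_mul, hx]
    | _ => simp [hc, hd]
  refine ⟨RingQuot.liftAlgHom F ⟨ψ, hrel⟩, fun i => ?_⟩
  rw [xT, RingQuot.liftAlgHom_mkAlgHom_apply, hx]

/-- The representation of `□̃_q` on the free algebra `F⟨x, y⟩` in which `x_k` and `x_{k+2}` act by
left multiplication by `x` and `y`. -/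
lemma exists_rep {F : Type*} [Field F] {q : F} (hq : q ≠ 0) (hq2 : q ^ 2 ≠ 1) (k : ZMod 4) :
    ∃ Ψ : BoxT F q →ₐ[F] Module.End F (FreeAlgebra F (Fin 2)),
      Ψ (xT F q k) = Algebra.lmul F _ (FreeAlgebra.ι F 0) ∧
      Ψ (xT F q (k + 2)) = Algebra.lmul F _ (FreeAlgebra.ι F 1) := by
  have hqq : q - q⁻¹ ≠ 0 := by
    intro h
    apply hq2
    field_simp at h
    linear_combination h
  obtain ⟨D, hD⟩ := exists_skew F ![q ^ 2, q⁻¹ ^ 2] ![-(q ^ 2 - 1), 1 - q⁻¹ ^ 2]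
  obtain ⟨E, hE⟩ := exists_skew F ![q⁻¹ ^ 2, q ^ 2] ![1 - q⁻¹ ^ 2, -(q ^ 2 - 1)]
  have hD0 := hD 0
  have hD1 := hD 1
  have hE0 := hE 0
  have hE1 := hE 1
  simp only [Matrix.cons_val_zero, Matrix.cons_val_one] at hD0 hD1 hE0 hE1
  let X : ZMod 4 → Module.End F (FreeAlgebra F (Fin 2)) :=
    ![Algebra.lmul F _ (FreeAlgebra.ι F 0), D, Algebra.lmul F _ (FreeAlgebra.ι F 1), E]
  have hX : ∀ i, (q - q⁻¹)⁻¹ • (q • (X i * X (i + 1)) - q⁻¹ • (X (i + 1) * X i)) = 1 := by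
    intro i
    rw [inv_smul_eq_iff₀ hqq]
    ext w
    have h4 : i = 0 ∨ i = 1 ∨ i = 2 ∨ i = 3 := by revert i; decide
    have e0 : X 0 = Algebra.lmul F _ (FreeAlgebra.ι F 0) := rfl
    have e1 : X 1 = D := rfl
    have e2 : X 2 = Algebra.lmul F _ (FreeAlgebra.ι F 1) := rfl
    have e3 : X 3 = E := rfl
    have s1 : (0 : ZMod 4) + 1 = 1 := rfl
    have s2 : (1 : ZMod 4) + 1 = 2 := rfl
    have s3 : (2 : ZMod 4) + 1 = 3 := rfl
    have s4 : (3 : ZMod 4) + 1 = 0 := rfl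
    rcases h4 with rfl | rfl | rfl | rfl <;>
    simp only [s1, s2, s3, s4, e0, e1, e2, e3, LinearMap.sub_apply, LinearMap.smul_apply,
      Module.End.mul_apply, Module.End.one_apply, Algebra.coe_lmul_eq_mul, LinearMap.mul_apply',
      hD0, hD1, hE0, hE1] <;>
    match_scalars <;> field_simp <;> ring
  obtain ⟨Ψ, hΨ⟩ := exists_boxT_hom q (fun i => X (i - k)) fun i => by
    simpa only [add_sub_right_comm] using hX (i - k)
  refine ⟨Ψ, ?_, ?_⟩
  · rw [hΨ, sub_self]; rfl
  · rw [hΨ, add_sub_cancel_left]; rfl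

/-- The free algebra is isomorphic to the subalgebra generated by two opposite generators; the even
and odd cases differ only by the rotation `k ↦ k + 1`. -/
lemma exists_equiv {F : Type*} [Field F] {q : F} (hq : q ≠ 0) (hq2 : q ^ 2 ≠ 1) (k : ZMod 4) :
    ∃ e : FreeAlgebra F (Fin 2) ≃ₐ[F]
        (Algebra.adjoin F {xT F q k, xT F q (k + 2)} : Subalgebra F (BoxT F q)),
      (e (FreeAlgebra.ι F 0) : BoxT F q) = xT F q k ∧
      (e (FreeAlgebra.ι F 1) : BoxT F q) = xT F q (k + 2) := by
  let f : FreeAlgebra F (Fin 2) →ₐ[F] BoxT F q :=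
    FreeAlgebra.lift F ![xT F q k, xT F q (k + 2)]
  have f0 : f (FreeAlgebra.ι F 0) = xT F q k := by simp [f]
  have f1 : f (FreeAlgebra.ι F 1) = xT F q (k + 2) := by simp [f]
  obtain ⟨Ψ, h0, h1⟩ := exists_rep hq hq2 k
  have hcomp : Ψ.comp f = Algebra.lmul F _ := by
    apply FreeAlgebra.hom_ext
    funext j
    fin_cases j
    · simpa [f0] using h0
    · simpa [f1] using h1
  have hf : Function.Injective f := by
    intro u v huv
    have h : Algebra.lmul F _ u = Algebra.lmul F _ v := by
      rw [← hcomp, AlgHom.comp_apply, AlgHom.comp_apply, huv]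
    simpa using LinearMap.congr_fun h 1
  have hrange : f.range = Algebra.adjoin F {xT F q k, xT F q (k + 2)} := by
    rw [← Matrix.range_cons_cons_empty, Algebra.adjoin_range_eq_range_freeAlgebra_lift]
  exact ⟨(AlgEquiv.ofInjective f hf).trans (Subalgebra.equivOfEq _ _ hrange), f0, f1⟩

/-- Proposition 6.15(i),(ii): the free algebra on two generators is isomorphic to the
even and odd subalgebras of `□̃_q`. -/
theorem stmt6 (F : Type*) [Field F] (q : F) (hq : q ≠ 0) (hq2 : q ^ 2 ≠ 1) :
    (∃ e : FreeAlgebra F (Fin 2) ≃ₐ[F]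
        (Algebra.adjoin F {xT F q 0, xT F q 2} : Subalgebra F (BoxT F q)),
      (e (FreeAlgebra.ι F 0) : BoxT F q) = xT F q 0 ∧
      (e (FreeAlgebra.ι F 1) : BoxT F q) = xT F q 2) ∧
    (∃ e : FreeAlgebra F (Fin 2) ≃ₐ[F]
        (Algebra.adjoin F {xT F q 1, xT F q 3} : Subalgebra F (BoxT F q)),
      (e (FreeAlgebra.ι F 0) : BoxT F q) = xT F q 1 ∧
      (e (FreeAlgebra.ι F 1) : BoxT F q) = xT F q 3) := by
  exact ⟨exists_equiv hq hq2 0, exists_equiv hq hq2 1⟩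
end
end
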